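/- Appendix Lemma (upper bounds by the relative entropy): Assume ψ̂ ∈ C³(ℝ^{19} × (0,∞)) satisfies the growth conditions, that ∇²_ξ ψ̂(ξ,θ) is positive definite and ∂_θ η̂(ξ,θ) > 0 for all (ξ,θ), and let M, δ > 0. Then there exist constants C₀, C₁, C₂, C₃ > 0 such that for every (ξ,v,θ) ∈ ℝ^{19} × ℝ³ × (0,∞) with ξ = (F,ζ,w) and every (ξ̄,v̄,θ̄) ∈ Γ_{M,δ}: (i) |η̂(ξ,θ|ξ̄,θ̄)| ≤ C₀ I(ξ,v,θ|ξ̄,v̄,θ̄); (ii) for every i, α, |Σ_B ((∂Φ^B/∂F_{iα})(F) − (∂Φ^B/∂F_{iα})(F̄))((∂ψ̂/∂ξ^B)(ξ,θ) − (∂ψ̂/∂ξ^B)(ξ̄,θ̄))| ≤ C₁ I(ξ,v,θ|ξ̄,v̄,θ̄); (iii) |(∂ψ̂/∂ξ)(ξ,θ|ξ̄,θ̄)| ≤ C₂ I(ξ,v,θ|ξ̄,v̄,θ̄); (iv) for every α, |Σ_{B,i} ((∂Φ^B/∂F_{iα})(F) − (∂Φ^B/∂F_{iα})(F̄))(v_i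 − v̄_i)| ≤ C₃ I(ξ,v,θ|ξ̄,v̄,θ̄). -/

import Mathlib

open Real MeasureTheory Filter Set Topology ENNReal NNReal

noncomputable section

abbrev Vec3 := Fin 3 → ℝ
abbrev Mat3 := Fin 3 → Fin 3 → ℝ
abbrev Xi := Mat3 × Mat3 × ℝ
abbrev Idx := (Fin 3 × Fin 3) ⊕ ((Fin 3 × Fin 3) ⊕ Unit)
abbrev FullState := Xi × Vec3 × ℝ

/-- Levi-Civita symbol on three indices. -/
def eps3 (i j k : Fin 3) : ℝ :=
  if (i, j, k) = (0, 1, 2) ∨ (i, j, k) = (1, 2, 0) ∨ (i, j, k) = (2, 0, 1) then 1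
  else if (i, j, k) = (2, 1, 0) ∨ (i, j, k) = (1, 0, 2) ∨ (i, j, k) = (0, 2, 1) then -1
  else 0

/-- Cofactor matrix (cof F)_{iα} = (1/2) ε_{ijk} ε_{αβγ} F_{jβ} F_{kγ}. -/
def cof3 (F : Mat3) : Mat3 := fun i α =>
  (1/2) * ∑ j, ∑ k, ∑ β, ∑ γ, eps3 i j k * eps3 α β γ * F j β * F k γ

/-- det F = (1/6) ε_{ijk} ε_{αβγ} F_{iα} F_{jβ} F_{kγ}. -/
def det3 (F : Mat3) : ℝ :=
  (1/6) * ∑ i, ∑ j, ∑ k, ∑ α, ∑ β, ∑ γ,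
    eps3 i j k * eps3 α β γ * F i α * F j β * F k γ

/-- The vector of null Lagrangians Φ(F) = (F, cof F, det F). -/
def Phi3 (F : Mat3) : Xi := (F, cof3 F, det3 F)

/-- Component ξ^B of ξ ∈ ℝ^19. -/
def xiComp (ξ : Xi) : Idx → ℝ
  | .inl (i, α) => ξ.1 i α
  | .inr (.inl (i, α)) => ξ.2.1 i α
  | .inr (.inr _) => ξ.2.2

def updMat (F : Mat3) (i α : Fin 3) (s : ℝ) : Mat3 :=
  Function.update F i (Function.update (F i) α s)

/-- Update component B of ξ to value s. -/
def xiUpd (ξ : Xi) : Idx → ℝ → Xi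
  | .inl (i, α), s => (updMat ξ.1 i α s, ξ.2)
  | .inr (.inl (i, α)), s => (ξ.1, updMat ξ.2.1 i α s, ξ.2.2)
  | .inr (.inr _), s => (ξ.1, ξ.2.1, s)

/-- ∂Φ^B/∂F_{iα}(F). -/
def dPhi (B : Idx) (i α : Fin 3) (F : Mat3) : ℝ :=
  deriv (fun s => xiComp (Phi3 (updMat F i α s)) B) (F i α)

/-- Partial derivative ∂ψ̂/∂ξ^B of a function ψ̂(ξ, θ). -/
def dXi (B : Idx) (ψ : Xi → ℝ → ℝ) (ξ : Xi) (θ : ℝ) : ℝ :=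
  deriv (fun s => ψ (xiUpd ξ B s) θ) (xiComp ξ B)

/-- Partial derivative ∂ψ̂/∂θ. -/
def dTh (ψ : Xi → ℝ → ℝ) (ξ : Xi) (θ : ℝ) : ℝ :=
  deriv (fun s => ψ ξ s) θ

/-- η̂(ξ,θ) = −∂_θ ψ̂(ξ,θ). -/
def etaHat (ψ : Xi → ℝ → ℝ) (ξ : Xi) (θ : ℝ) : ℝ := -(dTh ψ ξ θ)

/-- ê(ξ,θ) = ψ̂(ξ,θ) − θ ∂_θ ψ̂(ξ,θ). -/
def eHat (ψ : Xi → ℝ → ℝ) (ξ : Xi) (θ : ℝ) : ℝ := ψ ξ θ - θ * dTh ψ ξ θ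

/-- Spatial partial derivative ∂_α of a space-time field. -/
def pdx (α : Fin 3) (f : Vec3 → ℝ → ℝ) (x : Vec3) (t : ℝ) : ℝ :=
  deriv (fun s => f (Function.update x α s) t) (x α)

/-- Time derivative ∂_t of a space-time field. -/
def pdt (f : Vec3 → ℝ → ℝ) (x : Vec3) (t : ℝ) : ℝ :=
  deriv (fun s => f x s) t

def mnorm (F : Mat3) : ℝ := Real.sqrt (∑ i, ∑ j, (F i j)^2)
def vnorm (v : Vec3) : ℝ := Real.sqrt (∑ i, (v i)^2)

/-- |ξ|_{p,q,r} = |F|^p + |ζ|^q + |w|^r. -/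
def xiNorm (p q r : ℝ) (ξ : Xi) : ℝ :=
  mnorm ξ.1 ^ p + mnorm ξ.2.1 ^ q + |ξ.2.2| ^ r

/-- The compact set Γ_{M,δ}. -/
def Gamma (M δ : ℝ) : Set FullState :=
  {U | mnorm U.1.1 ≤ M ∧ mnorm U.1.2.1 ≤ M ∧ |U.1.2.2| ≤ M ∧
       vnorm U.2.1 ≤ M ∧ δ ≤ U.2.2 ∧ U.2.2 ≤ M}

/-- Relative free energy ψ̂(ξ,θ|ξ̄,θ̄). -/
def psiRel (ψ : Xi → ℝ → ℝ) (ξ : Xi) (θ : ℝ) (ξ' : Xi) (θ' : ℝ) : ℝ :=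
  ψ ξ θ - ψ ξ' θ' - (∑ B : Idx, dXi B ψ ξ' θ' * (xiComp ξ B - xiComp ξ' B))
    + etaHat ψ ξ' θ' * (θ - θ')

/-- Relative entropy function η̂(ξ,θ|ξ̄,θ̄). -/
def etaRel (ψ : Xi → ℝ → ℝ) (ξ : Xi) (θ : ℝ) (ξ' : Xi) (θ' : ℝ) : ℝ :=
  etaHat ψ ξ θ - etaHat ψ ξ' θ'
    - (∑ B : Idx, dXi B (etaHat ψ) ξ' θ' * (xiComp ξ B - xiComp ξ' B))
    - dTh (etaHat ψ) ξ' θ' * (θ - θ')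

/-- Relative stress (∂ψ̂/∂ξ^B)(ξ,θ|ξ̄,θ̄). -/
def dXiRel (B : Idx) (ψ : Xi → ℝ → ℝ) (ξ : Xi) (θ : ℝ) (ξ' : Xi) (θ' : ℝ) : ℝ :=
  dXi B ψ ξ θ - dXi B ψ ξ' θ'
    - (∑ A : Idx, dXi A (dXi B ψ) ξ' θ' * (xiComp ξ A - xiComp ξ' A))
    - dTh (dXi B ψ) ξ' θ' * (θ - θ')

/-- Relative entropy I(ξ,v,θ|ξ̄,v̄,θ̄). -/
def relEnt (ψ : Xi → ℝ → ℝ) (ξ : Xi) (v : Vec3) (θ : ℝ)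
    (ξ' : Xi) (v' : Vec3) (θ' : ℝ) : ℝ :=
  psiRel ψ ξ θ ξ' θ' + (1/2) * (∑ i, (v i - v' i)^2)
    + (etaHat ψ ξ θ - etaHat ψ ξ' θ') * (θ - θ')

/-- ψ̂ is C³ on ℝ^19 × (0,∞). -/
def PsiC3 (ψ : Xi → ℝ → ℝ) : Prop :=
  ContDiffOn ℝ 3 (fun p : Xi × ℝ => ψ p.1 p.2) (Set.univ ×ˢ Set.Ioi (0:ℝ))

/-- ∇²_ξ ψ̂ > 0 and ∂_θ η̂ > 0. -/
def PsiConvex (ψ : Xi → ℝ → ℝ) : Prop :=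
  ∀ ξ : Xi, ∀ θ : ℝ, 0 < θ →
    (∀ u : Idx → ℝ, u ≠ 0 →
      0 < ∑ A : Idx, ∑ B : Idx, dXi A (dXi B ψ) ξ θ * u A * u B) ∧
    0 < dTh (etaHat ψ) ξ θ

def gradFnorm (ψ : Xi → ℝ → ℝ) (ξ : Xi) (θ : ℝ) : ℝ :=
  Real.sqrt (∑ i, ∑ α, (dXi (.inl (i, α)) ψ ξ θ)^2)
def gradZnorm (ψ : Xi → ℝ → ℝ) (ξ : Xi) (θ : ℝ) : ℝ :=
  Real.sqrt (∑ i, ∑ α, (dXi (.inr (.inl (i, α))) ψ ξ θ)^2)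
def gradWnorm (ψ : Xi → ℝ → ℝ) (ξ : Xi) (θ : ℝ) : ℝ :=
  |dXi (.inr (.inr ())) ψ ξ θ|

/-- The growth conditions (gr.con.1)-(gr.con.3). -/
def GrowthCond (ψ : Xi → ℝ → ℝ) (c p q r ℓ : ℝ) : Prop :=
  0 < c ∧
  (∀ ξ : Xi, ∀ θ : ℝ, 0 < θ →
    c * (xiNorm p q r ξ + θ ^ ℓ) - c ≤ eHat ψ ξ θ ∧
    eHat ψ ξ θ ≤ c * (xiNorm p q r ξ + θ ^ ℓ) + c) ∧
  (∀ ε : ℝ, 0 < ε → ∃ R : ℝ, ∀ ξ : Xi, ∀ θ : ℝ, 0 < θ →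
    R < xiNorm p q r ξ + θ ^ ℓ →
    gradFnorm ψ ξ θ + gradZnorm ψ ξ θ ^ (p/(p-1)) + gradWnorm ψ ξ θ ^ (p/(p-2))
      ≤ ε * (xiNorm p q r ξ + θ ^ ℓ)) ∧
  (∀ ε : ℝ, 0 < ε → ∃ R : ℝ, ∀ ξ : Xi, ∀ θ : ℝ, 0 < θ →
    R < xiNorm p q r ξ + θ ^ ℓ →
    |dTh ψ ξ θ| ≤ ε * (xiNorm p q r ξ + θ ^ ℓ))

/-- The augmented thermoviscoelasticity system with fields (Z, Q, r), at a point (x,t). -/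
def AugSys (ψ : Xi → ℝ → ℝ) (ξf : Vec3 → ℝ → Xi) (vf : Vec3 → ℝ → Vec3)
    (θf : Vec3 → ℝ → ℝ) (Z : Vec3 → ℝ → Mat3) (Q : Vec3 → ℝ → Vec3)
    (r : Vec3 → ℝ → ℝ) (x : Vec3) (t : ℝ) : Prop :=
  (∀ B : Idx, pdt (fun y s => xiComp (ξf y s) B) x t
      = ∑ α, pdx α (fun y s => ∑ i, dPhi B i α (ξf y s).1 * vf y s i) x t) ∧
  (∀ i, pdt (fun y s => vf y s i) x t
      = ∑ α, pdx α (fun y s =>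
          ∑ B : Idx, dXi B ψ (ξf y s) (θf y s) * dPhi B i α (ξf y s).1) x t
        + ∑ α, pdx α (fun y s => Z y s i α) x t) ∧
  (pdt (fun y s => (1/2) * (∑ i, (vf y s i)^2) + eHat ψ (ξf y s) (θf y s)) x t
      = ∑ α, pdx α (fun y s => ∑ i,
          (∑ B : Idx, dXi B ψ (ξf y s) (θf y s) * dPhi B i α (ξf y s).1) * vf y s i) x t
        + ∑ α, pdx α (fun y s => ∑ i, Z y s i α * vf y s i) x t
        + ∑ α, pdx α (fun y s => Q y s α) x t + r x t) ∧
  (∀ i α β, pdx α (fun y s => (ξf y s).1 i β) x t = pdx β (fun y s => (ξf y s).1 i α) x t)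

/-- The entropy production identity for the augmented system. -/
def EntropyIdent (ψ : Xi → ℝ → ℝ) (ξf : Vec3 → ℝ → Xi) (vf : Vec3 → ℝ → Vec3)
    (θf : Vec3 → ℝ → ℝ) (Z : Vec3 → ℝ → Mat3) (Q : Vec3 → ℝ → Vec3)
    (r : Vec3 → ℝ → ℝ) (x : Vec3) (t : ℝ) : Prop :=
  pdt (fun y s => etaHat ψ (ξf y s) (θf y s)) x t
    - ∑ α, pdx α (fun y s => Q y s α / θf y s) x t
  = (∑ α, pdx α θf x t * Q x t α) / (θf x t)^2
    + (∑ α, ∑ i, pdx α (fun y s => vf y s i) x t * Z x t i α) / θf x t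
    + r x t / θf x t

/-- Newtonian viscous stress Z = μ ∇v. -/
def newtonianZ (μ : Mat3 → ℝ → ℝ) (ξf : Vec3 → ℝ → Xi) (vf : Vec3 → ℝ → Vec3)
    (θf : Vec3 → ℝ → ℝ) : Vec3 → ℝ → Mat3 :=
  fun x t i α => μ (ξf x t).1 (θf x t) * pdx α (fun y s => vf y s i) x t

/-- Fourier heat flux Q = k ∇θ. -/
def fourierQ (k : Mat3 → ℝ → ℝ) (ξf : Vec3 → ℝ → Xi)
    (θf : Vec3 → ℝ → ℝ) : Vec3 → ℝ → Vec3 :=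
  fun x t α => k (ξf x t).1 (θf x t) * pdx α θf x t

/-- The entropy identity for Newtonian viscosity and Fourier heat conduction (zero supply). -/
def EntropyIdentNF (ψ : Xi → ℝ → ℝ) (μ k : Mat3 → ℝ → ℝ) (ξf : Vec3 → ℝ → Xi)
    (vf : Vec3 → ℝ → Vec3) (θf : Vec3 → ℝ → ℝ) (x : Vec3) (t : ℝ) : Prop :=
  pdt (fun y s => etaHat ψ (ξf y s) (θf y s)) x t
    - ∑ α, pdx α (fun y s =>
        k (ξf y s).1 (θf y s) * pdx α θf y s / θf y s) x t
  = k (ξf x t).1 (θf x t) * (∑ α, (pdx α θf x t)^2) / (θf x t)^2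
    + μ (ξf x t).1 (θf x t) *
        (∑ α, ∑ i, (pdx α (fun y s => vf y s i) x t)^2) / θf x t

/-- Fundamental domain of the 3-torus. -/
def Box : Set Vec3 := Set.Icc 0 1

/-- Periodicity in the space variables with period 1. -/
def PeriodicX {E : Type*} (f : Vec3 → ℝ → E) : Prop :=
  ∀ (x : Vec3) (t : ℝ) (α : Fin 3), f (x + Pi.single α 1) t = f x t

/-- C^n regularity of a space-time field. -/
def FieldC {E : Type*} [NormedAddCommGroup E] [NormedSpace ℝ E]
    (n : ℕ) (f : Vec3 → ℝ → E) : Prop :=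
  ContDiff ℝ n (fun p : Vec3 × ℝ => f p.1 p.2)

/-- Spatial integral of the relative entropy at time t. -/
def relEntInt (ψ : Xi → ℝ → ℝ) (ξf : Vec3 → ℝ → Xi) (vf : Vec3 → ℝ → Vec3)
    (θf : Vec3 → ℝ → ℝ) (ξf' : Vec3 → ℝ → Xi) (vf' : Vec3 → ℝ → Vec3)
    (θf' : Vec3 → ℝ → ℝ) (t : ℝ) : ℝ :=
  ∫ x in Box, relEnt ψ (ξf x t) (vf x t) (θf x t) (ξf' x t) (vf' x t) (θf' x t)


/-- Spatial partial derivative of a static field. -/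
def pds (α : Fin 3) (f : Vec3 → ℝ) (x : Vec3) : ℝ :=
  deriv (fun s => f (Function.update x α s)) (x α)

/-- Deformation gradient ∇y of a static map y : ℝ³ → ℝ³. -/
def gradV (y : Vec3 → Vec3) (x : Vec3) : Mat3 :=
  fun i α => pds α (fun z => y z i) x

/-- ∂ψ/∂F_{iα} for ψ = ψ(F,θ). -/
def dFM (i α : Fin 3) (ψ : Mat3 → ℝ → ℝ) (F : Mat3) (θ : ℝ) : ℝ :=
  deriv (fun s => ψ (updMat F i α s) θ) (F i α)

/-- ∂ψ/∂θ for ψ = ψ(F,θ). -/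
def dThM (ψ : Mat3 → ℝ → ℝ) (F : Mat3) (θ : ℝ) : ℝ :=
  deriv (fun s => ψ F s) θ

/-- Index set for the full extended state U = (ξ, v, θ) ∈ ℝ²³. -/
abbrev UIdx := Idx ⊕ (Fin 3 ⊕ Unit)

def uComp (U : FullState) : UIdx → ℝ
  | .inl B => xiComp U.1 B
  | .inr (.inl i) => U.2.1 i
  | .inr (.inr _) => U.2.2

def uUpd (U : FullState) : UIdx → ℝ → FullState
  | .inl B, s => (xiUpd U.1 B s, U.2)
  | .inr (.inl i), s => (U.1, Function.update U.2.1 i s, U.2.2)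
  | .inr (.inr _), s => (U.1, U.2.1, s)

/-- Partial derivative in the state variables (ξ,v,θ). -/
def pdU (B : UIdx) (f : FullState → ℝ) (U : FullState) : ℝ :=
  deriv (fun s => f (uUpd U B s)) (uComp U B)

/-- Second partial derivative in the state variables (ξ,v,θ). -/
def pdU2 (A B : UIdx) (f : FullState → ℝ) (U : FullState) : ℝ :=
  pdU A (fun V => pdU B f V) U

/-- Test functions for the weak formulation on T³ × [0,T):
C¹, periodic in x, compactly supported in time in [0,T). -/
def TestFun (T : ℝ) (φ : Vec3 → ℝ → ℝ) : Prop :=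
  ContDiff ℝ 1 (fun p : Vec3 × ℝ => φ p.1 p.2) ∧ PeriodicX φ ∧
  ∃ T' : ℝ, T' < T ∧ ∀ (x : Vec3) (t : ℝ), T' ≤ t → φ x t = 0

/-- The elastic stress Σ_{iα} of the augmented constitutive theory. -/
def SigmaA (ψ : Xi → ℝ → ℝ) (ξ : Xi) (θ : ℝ) (i α : Fin 3) : ℝ :=
  ∑ B : Idx, dXi B ψ ξ θ * dPhi B i α ξ.1

/-!
Up to the kinetic energy, `I` is the Taylor remainder in `ξ` of a function convex in `ξ` minus the
Taylor remainder in `θ` of a function concave in `θ`. Near the reference states both Hessians are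
definite, so `I` dominates the squared distance of the two states. Away from them `I` dominates
the weight `W = 1 + N + |η|`, where `N = |ξ|_{p,q,r} + θ^ℓ`: expanding `I` leaves `e - θ̄ η` plus
terms linear in `ξ`. For large `N` the energy `e` wins, as `η` and `ξ` are of lower order. For
bounded `N` and `θ` close to `0`, concavity in `θ` keeps `I` away from `0`, and since the entropy is
bounded above there while `e` is bounded below, `- θ̄ η` makes `I` dominate `|η|` as well.

Each left-hand side is quadratic near the reference states and `O(W)` far away. A component `Φ^B`
of degree `j + 1` has `∂Φ^B/∂F = O(W^{j/p})`, while the growth conditions give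
`∂ψ/∂ξ^B = O(W^{1 - j/p})`, whence (ii) and (iii); and (iv) follows from Young's inequality, since
`W^{2j/p} ≤ W` for `j ≤ 2` and `p ≥ 4`.
-/

open Asymptotics

section TaylorRemainder

variable {E F : Type*} [NormedAddCommGroup E] [NormedSpace ℝ E]
  [NormedAddCommGroup F] [NormedSpace ℝ F]

/-- The first-order Taylor remainder of `f` at `y`. It is the paper's relative quantity
`f(x | y)`, formed with respect to all the variables of `f`. -/
def taylorRemainder (f : E → F) (x y : E) : F := f x - f y - fderiv ℝ f y (x - y)

lemma taylorRemainder_neg (f : E → F) (x y : E) :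
    taylorRemainder (-f) x y = -taylorRemainder f x y := by
  simp only [taylorRemainder, fderiv_neg, Pi.neg_apply, neg_apply]
  abel

lemma half_le_taylorRemainder {f : E → ℝ} {x y : E} {μ : ℝ}
    (hf : ∀ z ∈ segment ℝ y x, ContDiffAt ℝ 2 f z)
    (hμ : ∀ z ∈ segment ℝ y x, μ ≤ fderiv ℝ (fderiv ℝ f) z (x - y) (x - y)) :
    μ / 2 ≤ taylorRemainder f x y := by
  set γ : ℝ →ᵃ[ℝ] E := AffineMap.lineMap y x with hγ_def
  have hγ : ∀ t ∈ Icc (0 : ℝ) 1, γ t ∈ segment ℝ y x := fun t ht ↦ by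
    rw [segment_eq_image_lineMap]
    exact mem_image_of_mem _ ht
  have hγ' (t : ℝ) : HasDerivAt γ (x - y) t :=
    AffineMap.hasDerivAt_lineMap (𝕜 := ℝ)
  have h₁ : ∀ t ∈ Icc (0 : ℝ) 1, HasDerivAt (fun t ↦ f (γ t) - μ / 2 * t ^ 2)
      (fderiv ℝ f (γ t) (x - y) - μ * t) t := fun t ht ↦ by
    have hfγ :=
      ((hf _ (hγ t ht)).differentiableAt two_ne_zero).hasFDerivAt.comp_hasDerivAt t (hγ' t)
    exact (hfγ.sub ((hasDerivAt_pow 2 t).const_mul (μ / 2))).congr_deriv (by norm_num; ring)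
  have h₂ : ∀ t ∈ Icc (0 : ℝ) 1, HasDerivAt (fun t ↦ fderiv ℝ f (γ t) (x - y) - μ * t)
      (fderiv ℝ (fderiv ℝ f) (γ t) (x - y) (x - y) - μ) t := fun t ht ↦ by
    have hD : DifferentiableAt ℝ (fderiv ℝ f) (γ t) :=
      ((hf _ (hγ t ht)).fderiv_right (m := 1) le_rfl).differentiableAt one_ne_zero
    have hDγ := (hD.hasFDerivAt.comp_hasDerivAt t (hγ' t)).clm_apply (hasDerivAt_const t (x - y))
    exact (hDγ.sub ((hasDerivAt_id t).const_mul μ)).congr_deriv (by simp)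
  have hconv : ConvexOn ℝ (Icc (0 : ℝ) 1) fun t ↦ f (γ t) - μ / 2 * t ^ 2 := by
    refine convexOn_of_hasDerivWithinAt2_nonneg (convex_Icc 0 1)
      (fun t ht ↦ (h₁ t ht).continuousAt.continuousWithinAt)
      (fun t ht ↦ (h₁ t (interior_subset ht)).hasDerivWithinAt)
      (fun t ht ↦ (h₂ t (interior_subset ht)).hasDerivWithinAt)
      (fun t ht ↦ sub_nonneg.2 (hμ _ (hγ t (interior_subset ht))))
  have hslope := hconv.le_slope_of_hasDerivAt (left_mem_Icc.2 zero_le_one)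
    (right_mem_Icc.2 zero_le_one) zero_lt_one (h₁ 0 (left_mem_Icc.2 zero_le_one))
  simp only [slope_def_field, hγ_def, AffineMap.lineMap_apply_zero, AffineMap.lineMap_apply_one]
    at hslope
  rw [taylorRemainder]
  linarith

variable {Ω K : Set E}

lemma sub_isBigO_of_contDiffOn {f : E → F} (hf : ContDiffOn ℝ 1 f K) (hK : IsCompact K)
    (hKc : Convex ℝ K) :
    (fun z : E × E ↦ f z.1 - f z.2) =O[𝓟 (K ×ˢ K)] fun z ↦ z.1 - z.2 := by
  obtain ⟨L, hL⟩ := hf.exists_lipschitzOnWith one_ne_zero hKc hK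
  exact .of_bound L (eventually_principal.2 fun z hz ↦ hL.norm_sub_le hz.1 hz.2)

lemma taylorRemainder_isBigO_sq {f : E → F} (hΩ : IsOpen Ω) (hf : ContDiffOn ℝ 2 f Ω)
    (hK : IsCompact K) (hKc : Convex ℝ K) (hKΩ : K ⊆ Ω) :
    (fun z : E × E ↦ taylorRemainder f z.1 z.2) =O[𝓟 (K ×ˢ K)] fun z ↦ ‖z.1 - z.2‖ ^ 2 := by
  obtain ⟨L, hL⟩ := ((hf.fderiv_of_isOpen hΩ le_rfl).mono hKΩ).exists_lipschitzOnWith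
    one_ne_zero hKc hK
  refine .of_bound L (eventually_principal.2 ?_)
  rintro ⟨x, y⟩ ⟨hx : x ∈ K, hy : y ∈ K⟩
  have hsub : segment ℝ y x ⊆ K := hKc.segment_subset hy hx
  have hD : ∀ z ∈ segment ℝ y x, ‖fderiv ℝ f z - fderiv ℝ f y‖ ≤ L * ‖x - y‖ := fun z hz ↦
    (hL.norm_sub_le (hsub hz) hy).trans (by gcongr; exact norm_sub_le_of_mem_segment hz)
  have hdiff : ∀ z ∈ segment ℝ y x, DifferentiableAt ℝ f z := fun z hz ↦
    (hf.contDiffAt (hΩ.mem_nhds (hKΩ (hsub hz)))).differentiableAt two_ne_zero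
  calc ‖taylorRemainder f x y‖ ≤ L * ‖x - y‖ * ‖x - y‖ :=
        (convex_segment y x).norm_image_sub_le_of_norm_fderiv_le' hdiff hD
          (left_mem_segment ℝ y x) (right_mem_segment ℝ y x)
    _ = L * ‖‖x - y‖ ^ 2‖ := by rw [norm_pow, norm_norm]; ring

end TaylorRemainder

section CompactBounds

variable {E F : Type*} [NormedAddCommGroup E] [NormedSpace ℝ E]
  [NormedAddCommGroup F] [NormedSpace ℝ F] [FiniteDimensional ℝ F]

lemma exists_pos_mul_norm_sq_le_of_isCompact {X : Type*} [TopologicalSpace X] {K : Set X}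
    (hK : IsCompact K) {q : X → F → ℝ} (hq : ContinuousOn (Function.uncurry q) (K ×ˢ univ))
    (hsmul : ∀ x ∈ K, ∀ (t : ℝ) u, q x (t • u) = t ^ 2 * q x u)
    (hpos : ∀ x ∈ K, ∀ u ≠ 0, 0 < q x u) :
    ∃ m > 0, ∀ x ∈ K, ∀ u, m * ‖u‖ ^ 2 ≤ q x u := by
  obtain ⟨m, hm, hle⟩ := (hK.prod (isCompact_sphere (0 : F) 1)).exists_forall_le'
    (hq.mono (prod_mono_right (subset_univ _))) (a := 0)
    fun z hz ↦ hpos z.1 hz.1 z.2 (ne_zero_of_mem_unit_sphere ⟨z.2, hz.2⟩)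
  refine ⟨m, hm, fun x hx u ↦ ?_⟩
  rcases eq_or_ne u 0 with rfl | hu
  · simpa using (hsmul x hx 0 0).ge
  have hunit : ‖u‖⁻¹ • u ∈ Metric.sphere (0 : F) 1 := by simp [norm_smul, hu]
  calc m * ‖u‖ ^ 2 ≤ q x (‖u‖⁻¹ • u) * ‖u‖ ^ 2 := by
        gcongr
        exact hle (x, _) ⟨hx, hunit⟩
    _ = q x u := by rw [hsmul x hx]; field_simp

lemma exists_pos_mul_norm_sq_le_taylorRemainder {f : E → ℝ} {Ω K : Set E} (hΩ : IsOpen Ω)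
    (hf : ContDiffOn ℝ 2 f Ω) (hK : IsCompact K) (hKc : Convex ℝ K) (hKΩ : K ⊆ Ω) (L : F →L[ℝ] E)
    (hpos : ∀ z ∈ K, ∀ u ≠ 0, 0 < fderiv ℝ (fderiv ℝ f) z (L u) (L u)) :
    ∃ m > 0, ∀ x ∈ K, ∀ y ∈ K, ∀ u, x - y = L u → m * ‖u‖ ^ 2 ≤ taylorRemainder f x y := by
  have hD : ContinuousOn (fderiv ℝ (fderiv ℝ f)) K :=
    ((hf.fderiv_of_isOpen hΩ (m := 1) le_rfl).continuousOn_fderiv_of_isOpen hΩ le_rfl).mono hKΩ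
  have hq : ContinuousOn (fun z : E × F ↦ fderiv ℝ (fderiv ℝ f) z.1 (L z.2) (L z.2))
      (K ×ˢ univ) :=
    have hL : ContinuousOn (fun z : E × F ↦ L z.2) (K ×ˢ univ) := by fun_prop
    ((hD.comp continuousOn_fst fun _ hz ↦ hz.1).clm_apply hL).clm_apply hL
  obtain ⟨m, hm, hle⟩ := exists_pos_mul_norm_sq_le_of_isCompact hK
    (q := fun z u ↦ fderiv ℝ (fderiv ℝ f) z (L u) (L u)) hq
    (fun z _ t u ↦ by simp only [map_smul, smul_apply, smul_eq_mul]; ring) hpos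
  refine ⟨m / 2, by positivity, fun x hx y hy u hu ↦ ?_⟩
  have hsub : segment ℝ y x ⊆ K := hKc.segment_subset hy hx
  rw [div_mul_eq_mul_div]
  exact half_le_taylorRemainder (fun z hz ↦ hf.contDiffAt (hΩ.mem_nhds (hKΩ (hsub hz))))
    fun z hz ↦ hu ▸ hle z (hsub hz) u

end CompactBounds

section Deviation

lemma isBigO_comp_fst {X Y F G : Type*} [Norm F] [Norm G] {f : X → F} {g : X → G} {s : Set X}
    (t : Set Y) (hfg : f =O[𝓟 s] g) :
    (fun z : X × Y ↦ f z.1) =O[𝓟 (s ×ˢ t)] fun z ↦ g z.1 :=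
  hfg.comp_tendsto (tendsto_principal_principal.2 fun _ hz ↦ hz.1)

variable {E : Type*} [NormedAddCommGroup E] [NormedSpace ℝ E]

/-- `I` controls the deviation of states `x ∈ Ω` from reference states `y ∈ S`, with growth
weight `W`: it dominates `‖x - y‖ ^ 2` while `x` stays in the compact convex set `K`, which
contains `S`, and it dominates `W x` once `x` has left `K`. The pair `(x, y)` is encoded as a point
of `E × E`. -/
structure ControlsDeviation (I : E × E → ℝ) (W : E → ℝ) (Ω K S : Set E) : Prop where
  isOpen : IsOpen Ω
  isCompact : IsCompact K
  convex : Convex ℝ K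
  subset_domain : K ⊆ Ω
  reference_subset : S ⊆ K
  one_le_weight : ∀ x ∈ Ω, 1 ≤ W x
  id_isBigO : (fun x ↦ x) =O[𝓟 Ω] W
  sq_isBigO : (fun z : E × E ↦ ‖z.1 - z.2‖ ^ 2) =O[𝓟 (K ×ˢ S)] I
  weight_isBigO : (fun z : E × E ↦ W z.1) =O[𝓟 ((Ω \ K) ×ˢ S)] I

namespace ControlsDeviation

variable {I : E × E → ℝ} {W : E → ℝ} {Ω K S : Set E}

lemma isBigO_of_near_of_far {F : Type*} [Norm F] {φ : E × E → F}
    (hI : ControlsDeviation I W Ω K S)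
    (hnear : φ =O[𝓟 (K ×ˢ K)] fun z ↦ ‖z.1 - z.2‖ ^ 2)
    (hfar : φ =O[𝓟 (Ω ×ˢ K)] fun z ↦ W z.1) : φ =O[𝓟 (Ω ×ˢ S)] I := by
  have hcover : Ω ×ˢ S ⊆ K ×ˢ S ∪ (Ω \ K) ×ˢ S := by
    rw [← union_prod, union_sdiff_self]
    exact prod_mono_left subset_union_right
  refine IsBigO.mono ?_ (principal_mono.2 hcover)
  rw [← sup_principal]
  exact ((hnear.mono (principal_mono.2 (prod_mono_right hI.reference_subset))).trans
    hI.sq_isBigO).sup ((hfar.mono (principal_mono.2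
      (prod_mono sdiff_subset hI.reference_subset))).trans hI.weight_isBigO)

lemma comp_snd_isBigO_rpow {F : Type*} [NormedAddCommGroup F] {f : E → F} {s : ℝ}
    (hI : ControlsDeviation I W Ω K S) (hf : ContinuousOn f K) (hs : 0 ≤ s) :
    (fun z : E × E ↦ f z.2) =O[𝓟 (Ω ×ˢ K)] fun z ↦ W z.1 ^ s := by
  obtain ⟨C, hC⟩ := hI.isCompact.exists_bound_of_continuousOn hf
  refine .of_bound C (eventually_principal.2 fun z hz ↦ ?_)
  have hW := Real.one_le_rpow (hI.one_le_weight _ hz.1) hs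
  have hC₀ : 0 ≤ C := (norm_nonneg _).trans (hC _ hz.2)
  calc ‖f z.2‖ ≤ C * 1 := by simpa using hC _ hz.2
    _ ≤ C * ‖W z.1 ^ s‖ := by gcongr; exact hW.trans (le_abs_self _)

lemma taylorRemainder_isBigO {F : Type*} [NormedAddCommGroup F] [NormedSpace ℝ F] {f : E → F}
    (hI : ControlsDeviation I W Ω K S) (hf : ContDiffOn ℝ 2 f Ω) (hfW : f =O[𝓟 Ω] W) :
    (fun z : E × E ↦ taylorRemainder f z.1 z.2) =O[𝓟 (Ω ×ˢ S)] I := by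
  refine hI.isBigO_of_near_of_far
    (taylorRemainder_isBigO_sq hI.isOpen hf hI.isCompact hI.convex hI.subset_domain) ?_
  have hD : ContinuousOn (fderiv ℝ f) K :=
    (hf.continuousOn_fderiv_of_isOpen hI.isOpen one_le_two).mono hI.subset_domain
  have hsnd := hI.comp_snd_isBigO_rpow (hf.continuousOn.mono hI.subset_domain) zero_le_one
  have hsndD := hI.comp_snd_isBigO_rpow hD le_rfl
  have hdiff := hI.comp_snd_isBigO_rpow continuousOn_id zero_le_one
  simp only [Real.rpow_one, Real.rpow_zero, id_eq] at hsnd hsndD hdiff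
  have happly : (fun z : E × E ↦ fderiv ℝ f z.2 (z.1 - z.2)) =O[𝓟 (Ω ×ˢ K)] fun z ↦ W z.1 :=
    (IsBigO.of_norm_le fun z ↦ by
      simpa using (fderiv ℝ f z.2).le_opNorm (z.1 - z.2)).trans
      ((hsndD.norm_left.mul ((isBigO_comp_fst K hI.id_isBigO).sub hdiff).norm_left).congr_right
        fun z ↦ one_mul _)
  exact ((isBigO_comp_fst K hfW).sub hsnd).sub happly

lemma sub_mul_sub_isBigO {f g : E → ℝ} {s t : ℝ} (hI : ControlsDeviation I W Ω K S)
    (hf : ContDiffOn ℝ 1 f Ω) (hg : ContDiffOn ℝ 1 g Ω) (hs : 0 ≤ s) (ht : 0 ≤ t)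
    (hst : s + t ≤ 1) (hfW : f =O[𝓟 Ω] fun x ↦ W x ^ s) (hgW : g =O[𝓟 Ω] fun x ↦ W x ^ t) :
    (fun z : E × E ↦ (f z.1 - f z.2) * (g z.1 - g z.2)) =O[𝓟 (Ω ×ˢ S)] I := by
  have hfK := hf.mono hI.subset_domain
  have hgK := hg.mono hI.subset_domain
  refine hI.isBigO_of_near_of_far ?_ ?_
  · exact ((sub_isBigO_of_contDiffOn hfK hI.isCompact hI.convex).norm_right.mul
      (sub_isBigO_of_contDiffOn hgK hI.isCompact hI.convex).norm_right).congr_right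
      fun z ↦ (sq _).symm
  · have hmul := ((isBigO_comp_fst K hfW).sub (hI.comp_snd_isBigO_rpow hfK.continuousOn hs)).mul
      ((isBigO_comp_fst K hgW).sub (hI.comp_snd_isBigO_rpow hgK.continuousOn ht))
    refine hmul.trans (.of_bound' (eventually_principal.2 fun z hz ↦ ?_))
    have hW := hI.one_le_weight _ hz.1
    rw [← Real.rpow_add (by positivity), Real.norm_of_nonneg (by positivity),
      Real.norm_of_nonneg (by positivity)]
    exact (Real.rpow_le_rpow_of_exponent_le hW hst).trans_eq (Real.rpow_one _)

end ControlsDeviation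

end Deviation

section ThermodynamicPotential

/-- The thermodynamic states `(ξ, θ)` with positive temperature `θ`. -/
def positiveTemp (E : Type*) : Set (E × ℝ) := univ ×ˢ Ioi 0

/-- The states `(ξ, θ)` with `‖ξ‖ ≤ k` and `d ≤ θ ≤ k`. -/
def stateBox (E : Type*) [NormedAddCommGroup E] (k d : ℝ) : Set (E × ℝ) :=
  Metric.closedBall 0 k ×ˢ Icc d k

lemma mk_mem_positiveTemp {E : Type*} {θ : ℝ} (hθ : 0 < θ) (ξ : E) : (ξ, θ) ∈ positiveTemp E :=
  ⟨trivial, hθ⟩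

lemma isOpen_positiveTemp {E : Type*} [TopologicalSpace E] : IsOpen (positiveTemp E) :=
  isOpen_univ.prod isOpen_Ioi

lemma stateBox_subset_positiveTemp {E : Type*} [NormedAddCommGroup E] (k : ℝ) {d : ℝ}
    (hd : 0 < d) : stateBox E k d ⊆ positiveTemp E :=
  fun _ hx ↦ ⟨trivial, hd.trans_le hx.2.1⟩

variable {E : Type*} [NormedAddCommGroup E] [NormedSpace ℝ E]

/-- The entropy `η = -∂ψ/∂θ` of the free energy `ψ`. -/
def freeEntropy (ψ : E × ℝ → ℝ) (x : E × ℝ) : ℝ := -fderiv ℝ ψ x (0, 1)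

/-- The internal energy `e = ψ + θ η` of the free energy `ψ`. -/
def internalEnergy (ψ : E × ℝ → ℝ) (x : E × ℝ) : ℝ := ψ x + x.2 * freeEntropy ψ x

/-- The relative entropy of `x` with respect to `y`, without its kinetic part. -/
def relEntropy (ψ : E × ℝ → ℝ) (x y : E × ℝ) : ℝ :=
  taylorRemainder ψ x y + (freeEntropy ψ x - freeEntropy ψ y) * (x.2 - y.2)

/-- Thermodynamic stability of the free energy `ψ(ξ, θ)`: its Hessian is positive definite in `ξ`
and negative in `θ`. -/
structure IsStableFreeEnergy (ψ : E × ℝ → ℝ) : Prop where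
  contDiffOn : ContDiffOn ℝ 2 ψ (positiveTemp E)
  hessian_fst_pos : ∀ x ∈ positiveTemp E, ∀ u ≠ 0, 0 < fderiv ℝ (fderiv ℝ ψ) x (u, 0) (u, 0)
  hessian_snd_neg : ∀ x ∈ positiveTemp E, fderiv ℝ (fderiv ℝ ψ) x (0, 1) (0, 1) < 0

/-- Coercivity of the free energy `ψ` relative to a growth function `N`: the internal energy grows
at least like `N`, the mechanical variables and the entropy are of lower order than `N`. -/
structure IsCoerciveFreeEnergy (ψ N : E × ℝ → ℝ) : Prop where
  nonneg : ∀ x ∈ positiveTemp E, 0 ≤ N x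
  norm_le : ∃ C, ∀ x ∈ positiveTemp E, ‖x‖ ≤ N x + C
  fst_sublinear : ∀ ε > 0, ∃ C, ∀ x ∈ positiveTemp E, ‖x.1‖ ≤ ε * N x + C
  le_internalEnergy : ∃ c > 0, ∀ x ∈ positiveTemp E, c * N x - c ≤ internalEnergy ψ x
  freeEntropy_sublinear : ∀ ε > 0, ∃ R, ∀ x ∈ positiveTemp E, R < N x → |freeEntropy ψ x| ≤ ε * N x

lemma convex_positiveTemp : Convex ℝ (positiveTemp E) := convex_univ.prod (convex_Ioi 0)

lemma convex_stateBox (k d : ℝ) : Convex ℝ (stateBox E k d) :=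
  (convex_closedBall 0 k).prod (convex_Icc d k)

lemma isCompact_stateBox [FiniteDimensional ℝ E] (k d : ℝ) : IsCompact (stateBox E k d) :=
  have := FiniteDimensional.proper_real E
  (isCompact_closedBall 0 k).prod isCompact_Icc

lemma fderiv_apply_prod_eq (ψ : E × ℝ → ℝ) (x : E × ℝ) (u : E) (t : ℝ) :
    fderiv ℝ ψ x (u, t) = fderiv ℝ ψ x (u, 0) - t * freeEntropy ψ x := by
  have hsum : (u, t) = (u, (0 : ℝ)) + t • ((0 : E), (1 : ℝ)) := by simp
  rw [hsum, map_add, map_smul, freeEntropy, smul_eq_mul]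
  ring

lemma relEntropy_eq_taylorRemainder_sub (ψ : E × ℝ → ℝ) (x y : E × ℝ) :
    relEntropy ψ x y = taylorRemainder ψ (x.1, y.2) y - taylorRemainder ψ (x.1, y.2) x := by
  obtain ⟨ξ, θ⟩ := x
  obtain ⟨ξ', θ'⟩ := y
  simp only [relEntropy, taylorRemainder, Prod.mk_sub_mk, sub_self,
    fderiv_apply_prod_eq ψ _ _ (θ - θ'), fderiv_apply_prod_eq ψ _ _ (θ' - θ), Prod.mk_zero_zero,
    map_zero]
  ring

lemma internalEnergy_sub_eq (ψ : E × ℝ → ℝ) (x y : E × ℝ) :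
    internalEnergy ψ x - y.2 * freeEntropy ψ x
      = relEntropy ψ x y + (ψ y + fderiv ℝ ψ y (x.1 - y.1, 0)) := by
  rw [internalEnergy, relEntropy, taylorRemainder,
    show x - y = (x.1 - y.1, x.2 - y.2) from rfl, fderiv_apply_prod_eq ψ y _ (x.2 - y.2)]
  ring

namespace IsStableFreeEnergy

variable {ψ : E × ℝ → ℝ}

lemma contDiffAt_of_mem_segment (hψ : IsStableFreeEnergy ψ) {x y : E × ℝ}
    (hx : x ∈ positiveTemp E) (hy : y ∈ positiveTemp E) :
    ∀ z ∈ segment ℝ y x, ContDiffAt ℝ 2 ψ z := fun _ hz ↦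
  hψ.contDiffOn.contDiffAt (isOpen_positiveTemp.mem_nhds
    (convex_positiveTemp.segment_subset hy hx hz))

lemma taylorRemainder_nonneg (hψ : IsStableFreeEnergy ψ) {ξ ξ' : E} {θ : ℝ} (hθ : 0 < θ) :
    0 ≤ taylorRemainder ψ (ξ, θ) (ξ', θ) := by
  have hx := mk_mem_positiveTemp hθ ξ
  have hy := mk_mem_positiveTemp hθ ξ'
  refine (zero_div (2 : ℝ)).ge.trans
    (half_le_taylorRemainder (hψ.contDiffAt_of_mem_segment hx hy) fun z hz ↦ ?_)
  rw [Prod.mk_sub_mk, sub_self]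
  rcases eq_or_ne (ξ - ξ') 0 with h | h
  · simp [h, Prod.mk_zero_zero]
  · exact (hψ.hessian_fst_pos z (convex_positiveTemp.segment_subset hy hx hz) _ h).le

lemma hessian_neg_snd_pos (hψ : IsStableFreeEnergy ψ) {x : E × ℝ} (hx : x ∈ positiveTemp E)
    {t : ℝ} (ht : t ≠ 0) : 0 < fderiv ℝ (fderiv ℝ (-ψ)) x (0, t) (0, t) := by
  have ht' : ((0 : E), t) = t • ((0 : E), (1 : ℝ)) := by simp
  have hneg : fderiv ℝ (-ψ) = -fderiv ℝ ψ := funext fun z ↦ fderiv_neg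
  rw [hneg, fderiv_neg, ht']
  simp only [neg_apply, map_smul, smul_apply, smul_eq_mul]
  linarith [mul_pos (mul_self_pos.2 ht) (neg_pos.2 (hψ.hessian_snd_neg x hx))]

lemma taylorRemainder_nonpos (hψ : IsStableFreeEnergy ψ) (ξ : E) {θ θ' : ℝ} (hθ : 0 < θ)
    (hθ' : 0 < θ') : taylorRemainder ψ (ξ, θ) (ξ, θ') ≤ 0 := by
  have hx := mk_mem_positiveTemp hθ ξ
  have hy := mk_mem_positiveTemp hθ' ξ
  rw [← neg_nonneg, ← taylorRemainder_neg]
  refine (zero_div (2 : ℝ)).ge.trans (half_le_taylorRemainder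
    (fun z hz ↦ (hψ.contDiffAt_of_mem_segment hx hy z hz).neg) fun z hz ↦ ?_)
  rw [Prod.mk_sub_mk, sub_self]
  rcases eq_or_ne (θ - θ') 0 with h | h
  · simp [h, Prod.mk_zero_zero]
  · exact (hψ.hessian_neg_snd_pos (convex_positiveTemp.segment_subset hy hx hz) h).le

lemma neg_taylorRemainder_le_relEntropy (hψ : IsStableFreeEnergy ψ) {x y : E × ℝ}
    (hy : y ∈ positiveTemp E) : -taylorRemainder ψ (x.1, y.2) x ≤ relEntropy ψ x y := by
  rw [relEntropy_eq_taylorRemainder_sub]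
  linarith [hψ.taylorRemainder_nonneg (ξ := x.1) (ξ' := y.1) hy.2]

lemma relEntropy_nonneg (hψ : IsStableFreeEnergy ψ) {x y : E × ℝ} (hx : x ∈ positiveTemp E)
    (hy : y ∈ positiveTemp E) : 0 ≤ relEntropy ψ x y :=
  (neg_nonneg.2 (hψ.taylorRemainder_nonpos x.1 hy.2 hx.2)).trans
    (hψ.neg_taylorRemainder_le_relEntropy hy)

lemma freeEntropy_le_freeEntropy (hψ : IsStableFreeEnergy ψ) (ξ : E) {θ θ' : ℝ} (hθ : 0 < θ)
    (h : θ ≤ θ') : freeEntropy ψ (ξ, θ) ≤ freeEntropy ψ (ξ, θ') := by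
  rcases h.eq_or_lt with rfl | hlt
  · rfl
  have hsum := add_nonpos (hψ.taylorRemainder_nonpos ξ hθ (hθ.trans_le h))
    (hψ.taylorRemainder_nonpos ξ (hθ.trans_le h) hθ)
  simp only [taylorRemainder, Prod.mk_sub_mk, sub_self, fderiv_apply_prod_eq ψ _ _ (θ - θ'),
    fderiv_apply_prod_eq ψ _ _ (θ' - θ), Prod.mk_zero_zero, map_zero] at hsum
  nlinarith

variable [FiniteDimensional ℝ E]

lemma exists_pos_mul_sq_le_neg_taylorRemainder (hψ : IsStableFreeEnergy ψ) (k : ℝ) {d : ℝ}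
    (hd : 0 < d) : ∃ m > 0, ∀ ξ : E, ∀ θ θ', (ξ, θ) ∈ stateBox E k d → (ξ, θ') ∈ stateBox E k d →
      m * (θ - θ') ^ 2 ≤ -taylorRemainder ψ (ξ, θ) (ξ, θ') := by
  have hsub := stateBox_subset_positiveTemp (E := E) k hd
  obtain ⟨m, hm, hle⟩ := exists_pos_mul_norm_sq_le_taylorRemainder isOpen_positiveTemp
    hψ.contDiffOn.neg (isCompact_stateBox k d) (convex_stateBox k d) hsub
    (ContinuousLinearMap.inr ℝ E ℝ) fun z hz t ht ↦ hψ.hessian_neg_snd_pos (hsub hz) ht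
  refine ⟨m, hm, fun ξ θ θ' hx hy ↦ ?_⟩
  rw [← taylorRemainder_neg, ← sq_abs]
  exact hle _ hx _ hy (θ - θ') (by simp)

lemma sq_isBigO_relEntropy (hψ : IsStableFreeEnergy ψ) (k : ℝ) {d : ℝ} (hd : 0 < d) :
    (fun z : (E × ℝ) × (E × ℝ) ↦ ‖z.1 - z.2‖ ^ 2) =O[𝓟 (stateBox E k d ×ˢ stateBox E k d)]
      fun z ↦ relEntropy ψ z.1 z.2 := by
  have hsub := stateBox_subset_positiveTemp (E := E) k hd
  obtain ⟨m, hm, hfst⟩ := exists_pos_mul_norm_sq_le_taylorRemainder isOpen_positiveTemp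
    hψ.contDiffOn (isCompact_stateBox k d) (convex_stateBox k d) hsub
    (ContinuousLinearMap.inl ℝ E ℝ) fun z hz u hu ↦ hψ.hessian_fst_pos z (hsub hz) u hu
  obtain ⟨m', hm', hsnd⟩ := hψ.exists_pos_mul_sq_le_neg_taylorRemainder k hd
  refine .of_bound (1 / m + 1 / m') (eventually_principal.2 ?_)
  rintro ⟨⟨ξ, θ⟩, ⟨ξ', θ'⟩⟩ ⟨hx, hy⟩
  have hxy : (ξ, θ') ∈ stateBox E k d := ⟨hx.1, hy.2⟩
  have h₁ : m * ‖ξ - ξ'‖ ^ 2 ≤ taylorRemainder ψ (ξ, θ') (ξ', θ') := hfst _ hxy _ hy _ (by simp)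
  have h₂ : m' * (θ - θ') ^ 2 ≤ -taylorRemainder ψ (ξ, θ') (ξ, θ) := by
    simpa only [sub_sq_comm θ' θ] using hsnd ξ θ' θ hxy hx
  have h₁' := hψ.taylorRemainder_nonneg (ξ := ξ) (ξ' := ξ') (hsub hy).2
  have h₂' := hψ.taylorRemainder_nonpos ξ (hsub hy).2 (hsub hx).2
  have hI := relEntropy_eq_taylorRemainder_sub ψ (ξ, θ) (ξ', θ')
  have hmax : ‖(ξ, θ) - (ξ', θ')‖ ^ 2 ≤ ‖ξ - ξ'‖ ^ 2 + (θ - θ') ^ 2 := by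
    rw [← sq_abs (θ - θ'), ← Real.norm_eq_abs, Prod.mk_sub_mk, Prod.norm_mk]
    rcases max_cases ‖ξ - ξ'‖ ‖θ - θ'‖ with h | h <;> rw [h.1] <;> simp [sq_nonneg]
  rw [Real.norm_of_nonneg (by positivity), Real.norm_of_nonneg (hψ.relEntropy_nonneg
    (hsub hx) (hsub hy)), add_mul]
  refine hmax.trans (add_le_add ?_ ?_)
  · rw [one_div_mul_eq_div, le_div_iff₀' hm]
    linarith
  · rw [one_div_mul_eq_div, le_div_iff₀' hm']
    linarith

lemma exists_pos_le_relEntropy_of_cold (hψ : IsStableFreeEnergy ψ) (k : ℝ) {d d' : ℝ}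
    (hd : 0 < d) (hdd' : d < d') :
    ∃ m > 0, ∀ x ∈ positiveTemp E, ‖x.1‖ ≤ k → x.2 ≤ d → ∀ y ∈ stateBox E k d',
      m ≤ relEntropy ψ x y := by
  obtain ⟨m, hm, hle⟩ := hψ.exists_pos_mul_sq_le_neg_taylorRemainder k hd
  refine ⟨m * (d' - d) ^ 2, by have := sub_pos.2 hdd'; positivity, ?_⟩
  rintro ⟨ξ, θ⟩ hx hξ hθ ⟨ξ', θ'⟩ ⟨-, hθ'⟩
  have hdθ' : d < θ' := hdd'.trans_le hθ'.1
  have hbox (t : ℝ) (ht : t ∈ Icc d k) : (ξ, t) ∈ stateBox E k d :=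
    ⟨mem_closedBall_zero_iff.2 hξ, ht⟩
  have hquad := hle ξ θ' d (hbox _ ⟨hdθ'.le, hθ'.2⟩) (hbox _ ⟨le_rfl, hdθ'.le.trans hθ'.2⟩)
  -- By concavity the tangent at `θ ≤ d` lies above the tangent at `d`, beyond `d`.
  have htangent : taylorRemainder ψ (ξ, θ') (ξ, θ) ≤ taylorRemainder ψ (ξ, θ') (ξ, d) := by
    have hmono := hψ.freeEntropy_le_freeEntropy ξ hx.2 hθ
    have hconc := hψ.taylorRemainder_nonpos ξ hd hx.2
    simp only [taylorRemainder, Prod.mk_sub_mk, sub_self, fderiv_apply_prod_eq ψ _ _ (_ - _),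
      Prod.mk_zero_zero, map_zero] at hconc ⊢
    nlinarith [mul_nonneg (sub_nonneg.2 hmono) (sub_nonneg.2 hdθ'.le)]
  calc m * (d' - d) ^ 2 ≤ m * (θ' - d) ^ 2 := by
        have := sub_pos.2 hdd'
        gcongr
        exact hθ'.1
    _ ≤ -taylorRemainder ψ (ξ, θ') (ξ, θ) := by linarith
    _ ≤ relEntropy ψ (ξ, θ) (ξ', θ') :=
        hψ.neg_taylorRemainder_le_relEntropy (x := (ξ, θ)) (mk_mem_positiveTemp (hd.trans hdθ') ξ')

lemma exists_internalEnergy_sub_le (hψ : IsStableFreeEnergy ψ) (k : ℝ) {d : ℝ} (hd : 0 < d) :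
    ∃ L ≥ 0, ∀ x, ∀ y ∈ stateBox E k d,
      internalEnergy ψ x - y.2 * freeEntropy ψ x ≤ relEntropy ψ x y + L * (1 + ‖x.1‖) := by
  have hsub := stateBox_subset_positiveTemp (E := E) k hd
  have hD : ContinuousOn (fderiv ℝ ψ) (stateBox E k d) :=
    (hψ.contDiffOn.continuousOn_fderiv_of_isOpen isOpen_positiveTemp one_le_two).mono hsub
  obtain ⟨A, hA⟩ := (isCompact_stateBox k d).exists_bound_of_continuousOn
    (hψ.contDiffOn.continuousOn.mono hsub)
  obtain ⟨B, hB⟩ := (isCompact_stateBox k d).exists_bound_of_continuousOn hD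
  refine ⟨|A| + |B| * (1 + |k|), by positivity, fun x y hy ↦ ?_⟩
  have hdiff : ‖(x.1 - y.1, (0 : ℝ))‖ ≤ ‖x.1‖ + k := by
    simpa [Prod.norm_mk] using (norm_sub_le x.1 y.1).trans
      (add_le_add_right (mem_closedBall_zero_iff.1 hy.1) _)
  have hk : 0 ≤ k := (norm_nonneg _).trans (mem_closedBall_zero_iff.1 hy.1)
  have hDy : fderiv ℝ ψ y (x.1 - y.1, 0) ≤ |B| * (‖x.1‖ + k) :=
    (le_abs_self _).trans ((ContinuousLinearMap.le_opNorm _ _).trans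
      (mul_le_mul ((hB y hy).trans (le_abs_self B)) hdiff (norm_nonneg _) (abs_nonneg B)))
  have hψy : ψ y ≤ |A| := (le_abs_self _).trans ((hA y hy).trans (le_abs_self A))
  rw [internalEnergy_sub_eq ψ x y, abs_of_nonneg hk]
  nlinarith [mul_nonneg (abs_nonneg A) (norm_nonneg x.1), abs_nonneg B,
    mul_nonneg (mul_nonneg (abs_nonneg B) hk) (norm_nonneg x.1), hDy, hψy]

lemma exists_bound_of_internalEnergy_ge (hψ : IsStableFreeEnergy ψ) {e₀ : ℝ}
    (he : ∀ x ∈ positiveTemp E, e₀ ≤ internalEnergy ψ x) (k : ℝ) :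
    ∃ P, ∀ x ∈ positiveTemp E, ‖x.1‖ ≤ k → x.2 ≤ k → |ψ x| ≤ P ∧ freeEntropy ψ x ≤ P := by
  rcases le_or_gt k 0 with hk | hk
  · exact ⟨0, fun x hx _ hxk ↦ absurd (hxk.trans hk) (not_le.2 hx.2)⟩
  have hsub := stateBox_subset_positiveTemp (E := E) k hk
  have hη : ContinuousOn (freeEntropy ψ) (stateBox E k k) :=
    (((hψ.contDiffOn.continuousOn_fderiv_of_isOpen isOpen_positiveTemp one_le_two).mono
      hsub).clm_apply continuousOn_const).neg
  obtain ⟨A, hA⟩ := (isCompact_stateBox k k).exists_bound_of_continuousOn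
    (hψ.contDiffOn.continuousOn.mono hsub)
  obtain ⟨B, hB⟩ := (isCompact_stateBox k k).exists_bound_of_continuousOn hη
  refine ⟨|e₀| + |A| + |B| + k * |B|, ?_⟩
  rintro ⟨ξ, θ⟩ hx hξ hθk
  have htop : (ξ, k) ∈ stateBox E k k := ⟨mem_closedBall_zero_iff.2 hξ, le_rfl, le_rfl⟩
  have hθ : 0 < θ := hx.2
  have hψk := abs_le.1 ((hA _ htop).trans (le_abs_self A))
  have hηk := abs_le.1 ((hB _ htop).trans (le_abs_self B))
  have hmono := hψ.freeEntropy_le_freeEntropy ξ hθ hθk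
  have hconc := hψ.taylorRemainder_nonpos ξ hθ hk
  simp only [taylorRemainder, Prod.mk_sub_mk, sub_self, fderiv_apply_prod_eq ψ _ _ (_ - _),
    Prod.mk_zero_zero, map_zero] at hconc
  have hupper : ψ (ξ, θ) ≤ |A| + k * |B| := by
    linarith [mul_le_mul_of_nonneg_left hηk.2 (sub_nonneg.2 hθk),
      mul_nonneg hθ.le (abs_nonneg B)]
  have hlower : e₀ - k * |B| ≤ ψ (ξ, θ) := by
    have henergy : e₀ ≤ ψ (ξ, θ) + θ * freeEntropy ψ (ξ, θ) := he _ hx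
    linarith [mul_le_mul_of_nonneg_left (hmono.trans hηk.2) hθ.le,
      mul_le_mul_of_nonneg_right hθk (abs_nonneg B)]
  exact ⟨abs_le.2 ⟨by linarith [neg_abs_le e₀, abs_nonneg A, abs_nonneg B], by
    linarith [abs_nonneg e₀, abs_nonneg B]⟩,
    by linarith [abs_nonneg e₀, abs_nonneg A, mul_nonneg hk.le (abs_nonneg B)]⟩

lemma exists_stress_bound_of_internalEnergy_ge (hψ : IsStableFreeEnergy ψ) {e₀ : ℝ}
    (he : ∀ x ∈ positiveTemp E, e₀ ≤ internalEnergy ψ x) (k : ℝ) :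
    ∃ P, ∀ x ∈ positiveTemp E, ‖x.1‖ ≤ k → x.2 ≤ k → ∀ u, |fderiv ℝ ψ x (u, 0)| ≤ P * ‖u‖ := by
  obtain ⟨P, hP⟩ := hψ.exists_bound_of_internalEnergy_ge he (k + 1)
  refine ⟨2 * P, ?_⟩
  rintro ⟨ξ, θ⟩ hx hξ hθk u
  -- By convexity, a directional derivative is at most the increment of `ψ` over a unit step.
  have hunit (h : E) (hh : ‖h‖ = 1) : fderiv ℝ ψ (ξ, θ) (h, 0) ≤ 2 * P := by
    have hstep : ‖ξ + h‖ ≤ k + 1 := (norm_add_le _ _).trans (add_le_add hξ hh.le)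
    have hconv := hψ.taylorRemainder_nonneg (ξ := ξ + h) (ξ' := ξ) hx.2
    simp only [taylorRemainder, Prod.mk_sub_mk, sub_self, add_sub_cancel_left] at hconv
    linarith [(abs_le.1 (hP _ (mk_mem_positiveTemp hx.2 (ξ + h)) hstep (by linarith)).1).2,
      (abs_le.1 (hP _ hx (by linarith) (by linarith)).1).1]
  rcases eq_or_ne u 0 with rfl | hu
  · simp [Prod.mk_zero_zero]
  have hscale : fderiv ℝ ψ (ξ, θ) (u, 0) = ‖u‖ * fderiv ℝ ψ (ξ, θ) (‖u‖⁻¹ • u, 0) := by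
    rw [← smul_eq_mul, ← map_smul, Prod.smul_mk, smul_inv_smul₀ (norm_ne_zero_iff.2 hu), smul_zero]
  have hnorm : ‖‖u‖⁻¹ • u‖ = 1 := by simp [norm_smul, hu]
  have hneg := hunit (-(‖u‖⁻¹ • u)) (by rwa [norm_neg])
  rw [show (-(‖u‖⁻¹ • u), (0 : ℝ)) = -(‖u‖⁻¹ • u, 0) by simp, map_neg] at hneg
  rw [hscale, abs_mul, abs_norm, mul_comm]
  gcongr
  exact abs_le.2 ⟨by linarith, hunit _ hnorm⟩

end IsStableFreeEnergy

/-- The weight `1 + N + |η|`, which dominates the growth function `N` and the entropy. -/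
def growthWeight (ψ N : E × ℝ → ℝ) (x : E × ℝ) : ℝ := 1 + N x + |freeEntropy ψ x|

namespace IsCoerciveFreeEnergy

variable {ψ N : E × ℝ → ℝ}

lemma exists_le_internalEnergy (hN : IsCoerciveFreeEnergy ψ N) :
    ∃ e₀, ∀ x ∈ positiveTemp E, e₀ ≤ internalEnergy ψ x := by
  obtain ⟨c, hc, hle⟩ := hN.le_internalEnergy
  exact ⟨-c, fun x hx ↦ by nlinarith [hle x hx, mul_nonneg hc.le (hN.nonneg x hx)]⟩

lemma one_le_growthWeight (hN : IsCoerciveFreeEnergy ψ N) {x : E × ℝ} (hx : x ∈ positiveTemp E) :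
    1 ≤ growthWeight ψ N x := by
  rw [growthWeight]
  linarith [hN.nonneg x hx, abs_nonneg (freeEntropy ψ x)]

lemma id_isBigO_growthWeight (hN : IsCoerciveFreeEnergy ψ N) :
    (fun x ↦ x) =O[𝓟 (positiveTemp E)] growthWeight ψ N := by
  obtain ⟨C, hC⟩ := hN.norm_le
  refine .of_bound (1 + |C|) (eventually_principal.2 fun x hx ↦ ?_)
  have hW := hN.one_le_growthWeight hx
  rw [Real.norm_of_nonneg (zero_le_one.trans hW), growthWeight]
  rw [growthWeight] at hW
  nlinarith [hC x hx, le_abs_self C, abs_nonneg (freeEntropy ψ x), hN.nonneg x hx, abs_nonneg C]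

lemma exists_mul_sub_le_relEntropy [FiniteDimensional ℝ E] (hψ : IsStableFreeEnergy ψ)
    (hN : IsCoerciveFreeEnergy ψ N) (k : ℝ) {d : ℝ} (hd : 0 < d) :
    ∃ c > 0, ∃ B R, ∀ x ∈ positiveTemp E, R < N x → ∀ y ∈ stateBox E k d,
      c * N x - B ≤ relEntropy ψ x y := by
  obtain ⟨c, hc, henergy⟩ := hN.le_internalEnergy
  obtain ⟨L, hL, hrel⟩ := hψ.exists_internalEnergy_sub_le k hd
  -- With this `ε`, the sublinear terms `y.2 * η` and `L * ‖ξ‖` absorb only half of `c * N`.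
  set ε := c / (2 * (|k| + L + 1)) with hε_def
  have hεc : (|k| + L) * ε ≤ c / 2 := by
    rw [hε_def, mul_div_assoc', div_le_div_iff₀ (by positivity) two_pos]
    nlinarith [abs_nonneg k]
  obtain ⟨A, hA⟩ := hN.fst_sublinear ε (by positivity)
  obtain ⟨R, hR⟩ := hN.freeEntropy_sublinear ε (by positivity)
  refine ⟨c / 2, by positivity, c + L * (1 + A), R, fun x hx hxR y hy ↦ ?_⟩
  have hyk : |y.2| ≤ |k| :=
    abs_le_abs_of_nonneg (stateBox_subset_positiveTemp k hd hy).2.le hy.2.2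
  have hyη : y.2 * freeEntropy ψ x ≤ |k| * (ε * N x) :=
    (le_abs_self _).trans ((abs_mul _ _).trans_le
      (mul_le_mul hyk (hR x hx hxR) (abs_nonneg _) (abs_nonneg k)))
  nlinarith [henergy x hx, hrel x y hy, mul_le_mul_of_nonneg_left (hA x hx) hL,
    mul_le_mul_of_nonneg_right hεc (hN.nonneg x hx)]

lemma exists_growthWeight_le_of_large [FiniteDimensional ℝ E] (hψ : IsStableFreeEnergy ψ)
    (hN : IsCoerciveFreeEnergy ψ N) (k : ℝ) {d : ℝ} (hd : 0 < d) :
    ∃ R C, ∀ x ∈ positiveTemp E, R < N x → ∀ y ∈ stateBox E k d,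
      growthWeight ψ N x ≤ C * relEntropy ψ x y := by
  obtain ⟨c, hc, B, R, hR⟩ := hN.exists_mul_sub_le_relEntropy hψ k hd
  obtain ⟨R', hη⟩ := hN.freeEntropy_sublinear 1 one_pos
  refine ⟨max R (max R' (max 1 (2 * B / c))), 3 * (2 / c), fun x hx hxR y hy ↦ ?_⟩
  obtain ⟨hRx, hR'x, h1x, hBx⟩ : R < N x ∧ R' < N x ∧ 1 < N x ∧ 2 * B / c < N x := by
    simpa only [max_lt_iff] using hxR
  have hNI : N x ≤ 2 / c * relEntropy ψ x y := by
    rw [div_mul_eq_mul_div, le_div_iff₀ hc]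
    rw [div_lt_iff₀ hc] at hBx
    linarith [hR x hx hRx y hy]
  rw [growthWeight]
  linarith [hη x hx hR'x]

lemma exists_abs_freeEntropy_le [FiniteDimensional ℝ E] (hψ : IsStableFreeEnergy ψ)
    (hN : IsCoerciveFreeEnergy ψ N) (k : ℝ) {d : ℝ} (hd : 0 < d) :
    ∃ A, ∀ x ∈ positiveTemp E, ‖x.1‖ ≤ k → x.2 ≤ k → ∀ y ∈ stateBox E k d,
      |freeEntropy ψ x| ≤ A + 1 / d * relEntropy ψ x y := by
  obtain ⟨e₀, he⟩ := hN.exists_le_internalEnergy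
  obtain ⟨P, hP⟩ := hψ.exists_bound_of_internalEnergy_ge he k
  obtain ⟨L, hL, hrel⟩ := hψ.exists_internalEnergy_sub_le k hd
  set A := L * (1 + |k|) + |e₀|
  refine ⟨|P| + 1 / d * A, fun x hx hξ hθ y hy ↦ ?_⟩
  have hI : 0 ≤ relEntropy ψ x y := hψ.relEntropy_nonneg hx (stateBox_subset_positiveTemp k hd hy)
  have hupper : freeEntropy ψ x ≤ |P| := (hP x hx hξ hθ).2.trans (le_abs_self P)
  have hlower : -freeEntropy ψ x ≤ 1 / d * (relEntropy ψ x y + A) := by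
    rcases le_or_gt 0 (freeEntropy ψ x) with h | h
    · exact (neg_nonpos.2 h).trans (by positivity)
    · rw [one_div_mul_eq_div, le_div_iff₀ hd]
      have hLk : L * (1 + ‖x.1‖) ≤ L * (1 + |k|) := by gcongr; exact hξ.trans (le_abs_self k)
      nlinarith [hrel x y hy, he x hx, neg_abs_le e₀, hy.2.1]
  have hsum : 0 ≤ 1 / d * (relEntropy ψ x y + A) := by positivity
  exact abs_le.2 ⟨by linarith [abs_nonneg P], by linarith⟩

lemma exists_growthWeight_le_of_cold [FiniteDimensional ℝ E] (hψ : IsStableFreeEnergy ψ)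
    (hN : IsCoerciveFreeEnergy ψ N) (k R : ℝ) {d d' : ℝ} (hd : 0 < d) (hdd' : d < d') :
    ∃ C, ∀ x ∈ positiveTemp E, ‖x.1‖ ≤ k → x.2 ≤ d → N x ≤ R → ∀ y ∈ stateBox E k d',
      growthWeight ψ N x ≤ C * relEntropy ψ x y := by
  obtain ⟨A, hA⟩ := hN.exists_abs_freeEntropy_le hψ k (hd.trans hdd')
  obtain ⟨m, hm, hcold⟩ := hψ.exists_pos_le_relEntropy_of_cold k hd hdd'
  refine ⟨(1 + |R| + |A|) / m + 1 / d', fun x hx hξ hθ hR y hy ↦ ?_⟩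
  have hθk : x.2 ≤ k := hθ.trans (hdd'.le.trans (hy.2.1.trans hy.2.2))
  calc growthWeight ψ N x ≤ (1 + |R| + |A|) / m * m + 1 / d' * relEntropy ψ x y := by
        rw [growthWeight, div_mul_cancel₀ _ hm.ne']
        linarith [hA x hx hξ hθk y hy, le_abs_self R, le_abs_self A]
    _ ≤ (1 + |R| + |A|) / m * relEntropy ψ x y + 1 / d' * relEntropy ψ x y := by
        gcongr
        exact hcold x hx hξ hθ y hy
    _ = ((1 + |R| + |A|) / m + 1 / d') * relEntropy ψ x y := by ring

theorem exists_controlsDeviation [FiniteDimensional ℝ E] (hψ : IsStableFreeEnergy ψ)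
    (hN : IsCoerciveFreeEnergy ψ N) (M : ℝ) {δ : ℝ} (hδ : 0 < δ) :
    ∃ K, ControlsDeviation (fun z ↦ relEntropy ψ z.1 z.2) (growthWeight ψ N) (positiveTemp E) K
      (stateBox E M δ) := by
  obtain ⟨R, C, hlarge⟩ := hN.exists_growthWeight_le_of_large hψ M hδ
  obtain ⟨A, hA⟩ := hN.norm_le
  set k := max M (R + A)
  obtain ⟨C', hcold⟩ := hN.exists_growthWeight_le_of_cold hψ k R (half_pos hδ) (half_lt_self hδ)
  have hbox : stateBox E M δ ⊆ stateBox E k δ :=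
    prod_mono (Metric.closedBall_subset_closedBall (le_max_left _ _))
      (Icc_subset_Icc_right (le_max_left _ _))
  have hbox' : stateBox E M δ ⊆ stateBox E k (δ / 2) :=
    hbox.trans (prod_mono_right (Icc_subset_Icc_left (half_le_self hδ.le)))
  refine ⟨stateBox E k (δ / 2), isOpen_positiveTemp, isCompact_stateBox _ _, convex_stateBox _ _,
    stateBox_subset_positiveTemp k (half_pos hδ), hbox', fun x hx ↦ hN.one_le_growthWeight hx,
    hN.id_isBigO_growthWeight, (hψ.sq_isBigO_relEntropy k (half_pos hδ)).mono
      (principal_mono.2 (prod_mono_right hbox')), ?_⟩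
  refine .of_bound (max C C') (eventually_principal.2 ?_)
  rintro ⟨x, y⟩ ⟨⟨hx : x ∈ positiveTemp E, hxK : x ∉ stateBox E k (δ / 2)⟩,
    hy : y ∈ stateBox E M δ⟩
  have hI := hψ.relEntropy_nonneg hx (stateBox_subset_positiveTemp M hδ hy)
  rw [Real.norm_of_nonneg (zero_le_one.trans (hN.one_le_growthWeight hx)),
    Real.norm_of_nonneg hI]
  rcases lt_or_ge R (N x) with hR | hR
  · exact (hlarge x hx hR y hy).trans (by gcongr; exact le_max_left _ _)
  · have hxk : ‖x‖ ≤ k := (hA x hx).trans ((by linarith : N x + A ≤ R + A).trans (le_max_right _ _))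
    have hξ : ‖x.1‖ ≤ k := (norm_fst_le x).trans hxk
    have hθ : x.2 ≤ δ / 2 := by
      by_contra! h
      exact hxK ⟨mem_closedBall_zero_iff.2 hξ, h.le,
        (le_abs_self _).trans ((norm_snd_le x).trans hxk)⟩
    exact (hcold x hx hξ hθ hR y (hbox hy)).trans (by gcongr; exact le_max_right _ _)

lemma le_growthWeight (ψ N : E × ℝ → ℝ) (x : E × ℝ) : N x ≤ growthWeight ψ N x := by
  rw [growthWeight]
  linarith [abs_nonneg (freeEntropy ψ x)]

lemma freeEntropy_isBigO_growthWeight (hN : IsCoerciveFreeEnergy ψ N) :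
    freeEntropy ψ =O[𝓟 (positiveTemp E)] growthWeight ψ N := by
  refine .of_bound' (eventually_principal.2 fun x hx ↦ ?_)
  rw [Real.norm_eq_abs, Real.norm_of_nonneg (zero_le_one.trans (hN.one_le_growthWeight hx)),
    growthWeight]
  linarith [hN.nonneg x hx]

lemma stress_isBigO_growthWeight_rpow [FiniteDimensional ℝ E] (hψ : IsStableFreeEnergy ψ)
    (hN : IsCoerciveFreeEnergy ψ N) {u : E} {s A R : ℝ} (hs : 0 ≤ s)
    (hu : ∀ x ∈ positiveTemp E, R < N x → |fderiv ℝ ψ x (u, 0)| ≤ A * N x ^ s) :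
    (fun x ↦ fderiv ℝ ψ x (u, 0)) =O[𝓟 (positiveTemp E)] fun x ↦ growthWeight ψ N x ^ s := by
  obtain ⟨e₀, he⟩ := hN.exists_le_internalEnergy
  obtain ⟨C, hC⟩ := hN.norm_le
  obtain ⟨P, hP⟩ := hψ.exists_stress_bound_of_internalEnergy_ge he (R + C)
  refine .of_bound (|A| + |P| * ‖u‖) (eventually_principal.2 fun x hx ↦ ?_)
  have hW := hN.one_le_growthWeight hx
  have hWs : 1 ≤ growthWeight ψ N x ^ s := Real.one_le_rpow hW hs
  rw [Real.norm_eq_abs, Real.norm_of_nonneg (zero_le_one.trans hWs)]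
  rcases lt_or_ge R (N x) with hR | hR
  · have hNW : N x ^ s ≤ growthWeight ψ N x ^ s :=
      Real.rpow_le_rpow (hN.nonneg x hx) (le_growthWeight ψ N x) hs
    calc |fderiv ℝ ψ x (u, 0)| ≤ A * N x ^ s := hu x hx hR
      _ ≤ |A| * growthWeight ψ N x ^ s :=
        mul_le_mul (le_abs_self A) hNW (Real.rpow_nonneg (hN.nonneg x hx) s) (abs_nonneg A)
      _ ≤ (|A| + |P| * ‖u‖) * growthWeight ψ N x ^ s := by
        gcongr
        exact le_add_of_nonneg_right (by positivity)
  · have hxk : ‖x‖ ≤ R + C := (hC x hx).trans (by gcongr)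
    have hθ : x.2 ≤ R + C := (le_abs_self _).trans ((norm_snd_le x).trans hxk)
    calc |fderiv ℝ ψ x (u, 0)| ≤ P * ‖u‖ := hP x hx ((norm_fst_le x).trans hxk) hθ u
      _ ≤ (|A| + |P| * ‖u‖) * 1 := by
        rw [mul_one]
        exact (mul_le_mul_of_nonneg_right (le_abs_self P) (norm_nonneg u)).trans
          (le_add_of_nonneg_left (abs_nonneg A))
      _ ≤ (|A| + |P| * ‖u‖) * growthWeight ψ N x ^ s := by gcongr

end IsCoerciveFreeEnergy

end ThermodynamicPotential

section DirectionalDerivatives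

variable {E F : Type*} [NormedAddCommGroup E] [NormedSpace ℝ E]
  [NormedAddCommGroup F] [NormedSpace ℝ F]

lemma fderiv_smul_of_homogeneous {f : E → F} {n : ℕ} (hf : Differentiable ℝ f)
    (hom : ∀ (t : ℝ) (x : E), f (t • x) = t ^ (n + 1) • f x) {t : ℝ} (ht : t ≠ 0) (x : E) :
    fderiv ℝ f (t • x) = t ^ n • fderiv ℝ f x := by
  have hcomp : t • fderiv ℝ f (t • x) = t ^ (n + 1) • fderiv ℝ f x := by
    rw [← fderiv_comp_smul, funext (hom t)]
    exact fderiv_const_smul (hf x) _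
  rw [pow_succ', mul_smul] at hcomp
  exact smul_right_injective _ ht hcomp

lemma fderiv_isBigO_of_homogeneous [FiniteDimensional ℝ E] {f : E → F} {n : ℕ}
    (hf : ContDiff ℝ 1 f) (hom : ∀ (t : ℝ) (x : E), f (t • x) = t ^ (n + 1) • f x) :
    fderiv ℝ f =O[⊤] fun x ↦ (1 + ‖x‖) ^ n := by
  have := FiniteDimensional.proper_real E
  obtain ⟨C, hC⟩ := (isCompact_closedBall (0 : E) 1).exists_bound_of_continuousOn
    (hf.continuous_fderiv one_ne_zero).continuousOn
  refine .of_bound C (eventually_top.2 fun x ↦ ?_)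
  have hpos : 0 < 1 + ‖x‖ := by positivity
  have hball : (1 + ‖x‖)⁻¹ • x ∈ Metric.closedBall (0 : E) 1 := by
    rw [mem_closedBall_zero_iff, norm_smul, norm_inv, Real.norm_of_nonneg hpos.le,
      inv_mul_le_one₀ hpos]
    linarith
  calc ‖fderiv ℝ f x‖ = ‖fderiv ℝ f ((1 + ‖x‖) • (1 + ‖x‖)⁻¹ • x)‖ := by
        rw [smul_inv_smul₀ hpos.ne']
    _ = ‖(1 + ‖x‖) ^ n‖ * ‖fderiv ℝ f ((1 + ‖x‖)⁻¹ • x)‖ := by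
        rw [fderiv_smul_of_homogeneous (hf.differentiable one_ne_zero) hom hpos.ne', norm_smul]
    _ ≤ C * ‖(1 + ‖x‖) ^ n‖ := by
        rw [mul_comm]
        gcongr
        exact hC _ hball

lemma deriv_comp_add_sub_smul {f : E → F} {x : E} (hf : DifferentiableAt ℝ f x) (v : E) (a : ℝ) :
    deriv (fun s : ℝ ↦ f (x + (s - a) • v)) a = fderiv ℝ f x v := by
  rw [deriv_comp_sub_const (fun t : ℝ ↦ f (x + t • v)), sub_self, ← hf.lineDeriv_eq_fderiv,
    lineDeriv]

lemma fderiv_fderiv_apply_of_eqOn {f : E → F} {g : E → F} {Ω : Set E} {x v : E}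
    (hΩ : IsOpen Ω) (hx : x ∈ Ω) (hf : ContDiffOn ℝ 2 f Ω)
    (hg : EqOn g (fun y ↦ fderiv ℝ f y v) Ω) (u : E) :
    fderiv ℝ (fderiv ℝ f) x u v = fderiv ℝ g x u := by
  have hD : DifferentiableAt ℝ (fderiv ℝ f) x :=
    ((hf.contDiffAt (hΩ.mem_nhds hx)).fderiv_right (m := 1) le_rfl).differentiableAt one_ne_zero
  rw [(hg.eventuallyEq_of_mem (hΩ.mem_nhds hx)).fderiv_eq,
    fderiv_clm_apply hD (differentiableAt_const v)]
  simp

end DirectionalDerivatives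

section Coordinates

/-- The standard basis vector of `ℝ^19` with index `B`. -/
def xiBasis (B : Idx) : Xi := xiUpd 0 B 1

lemma updMat_apply (F : Mat3) (i α : Fin 3) (s : ℝ) (j β : Fin 3) :
    updMat F i α s j β = F j β + (s - F i α) * (if j = i ∧ β = α then 1 else 0) := by
  by_cases hj : j = i
  · by_cases hβ : β = α
    · simp [updMat, hj, hβ]
    · simp [updMat, hj, hβ]
  · simp [updMat, hj]

lemma xiUpd_eq_add_smul (ξ : Xi) (B : Idx) (s : ℝ) :
    xiUpd ξ B s = ξ + (s - xiComp ξ B) • xiBasis B := by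
  rcases B with ⟨i, α⟩ | ⟨i, α⟩ | _ <;> ext <;> simp [xiUpd, xiBasis, xiComp, updMat_apply]

lemma sum_xiComp_smul_xiBasis (u : Xi) : ∑ B : Idx, xiComp u B • xiBasis B = u := by
  ext <;> simp [Prod.fst_sum, Prod.snd_sum, Fintype.sum_sum_type, Fintype.sum_prod_type, ite_and,
    xiBasis, xiUpd, updMat_apply, xiComp]

lemma mk_zero_eq_sum_smul_xiBasis (u : Xi) :
    (u, (0 : ℝ)) = ∑ B : Idx, xiComp u B • (xiBasis B, (0 : ℝ)) :=
  Prod.ext (by simp [Prod.fst_sum, sum_xiComp_smul_xiBasis, -Fintype.sum_sum_type])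
    (by simp [Prod.snd_sum, -Fintype.sum_sum_type])

lemma xiComp_sub (ξ ξ' : Xi) (B : Idx) : xiComp (ξ - ξ') B = xiComp ξ B - xiComp ξ' B := by
  rcases B with ⟨i, α⟩ | ⟨i, α⟩ | _ <;> rfl

variable {f : Xi → ℝ → ℝ} {ξ : Xi} {θ : ℝ}

lemma dXi_eq_fderiv (hf : DifferentiableAt ℝ (Function.uncurry f) (ξ, θ)) (B : Idx) :
    dXi B f ξ θ = fderiv ℝ (Function.uncurry f) (ξ, θ) (xiBasis B, 0) := by
  rw [← deriv_comp_add_sub_smul hf _ (xiComp ξ B), dXi]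
  simp [xiUpd_eq_add_smul]

lemma dTh_eq_fderiv (hf : DifferentiableAt ℝ (Function.uncurry f) (ξ, θ)) :
    dTh f ξ θ = fderiv ℝ (Function.uncurry f) (ξ, θ) (0, 1) := by
  rw [← deriv_comp_add_sub_smul hf _ θ, dTh]
  simp

lemma fderiv_uncurry_apply (hf : DifferentiableAt ℝ (Function.uncurry f) (ξ, θ)) (u : Xi) (t : ℝ) :
    fderiv ℝ (Function.uncurry f) (ξ, θ) (u, t)
      = ∑ B : Idx, dXi B f ξ θ * xiComp u B + dTh f ξ θ * t := by
  rw [fderiv_apply_prod_eq, freeEntropy, ← dTh_eq_fderiv hf, mk_zero_eq_sum_smul_xiBasis, map_sum]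
  simp only [map_smul, smul_eq_mul, ← dXi_eq_fderiv hf, mul_comm, mul_neg, sub_neg_eq_add]

lemma sub_sub_sum_dXi_eq_taylorRemainder {ξ' : Xi} {θ' : ℝ}
    (hf : DifferentiableAt ℝ (Function.uncurry f) (ξ', θ')) :
    f ξ θ - f ξ' θ' - ∑ B : Idx, dXi B f ξ' θ' * (xiComp ξ B - xiComp ξ' B)
      - dTh f ξ' θ' * (θ - θ') = taylorRemainder (Function.uncurry f) (ξ, θ) (ξ', θ') := by
  rw [taylorRemainder, Prod.mk_sub_mk, fderiv_uncurry_apply hf]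
  simp only [Function.uncurry_apply_pair, xiComp_sub]
  ring

variable {m n : WithTop ℕ∞}

lemma differentiableAt_of_contDiffOn_positiveTemp
    (hf : ContDiffOn ℝ n (Function.uncurry f) (positiveTemp Xi)) (hmn : m + 1 ≤ n) {x : Xi × ℝ}
    (hx : x ∈ positiveTemp Xi) : DifferentiableAt ℝ (Function.uncurry f) x :=
  (hf.contDiffAt (isOpen_positiveTemp.mem_nhds hx)).differentiableAt
    (zero_lt_one.trans_le (le_add_self.trans hmn)).ne'

lemma contDiffOn_uncurry_dXi (hf : ContDiffOn ℝ n (Function.uncurry f) (positiveTemp Xi))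
    (hmn : m + 1 ≤ n) (B : Idx) :
    ContDiffOn ℝ m (Function.uncurry (dXi B f)) (positiveTemp Xi) :=
  ((hf.fderiv_of_isOpen isOpen_positiveTemp hmn).clm_apply contDiffOn_const).congr fun _ hx ↦
    dXi_eq_fderiv (differentiableAt_of_contDiffOn_positiveTemp hf hmn hx) B

lemma contDiffOn_uncurry_dTh (hf : ContDiffOn ℝ n (Function.uncurry f) (positiveTemp Xi))
    (hmn : m + 1 ≤ n) : ContDiffOn ℝ m (Function.uncurry (dTh f)) (positiveTemp Xi) :=
  ((hf.fderiv_of_isOpen isOpen_positiveTemp hmn).clm_apply contDiffOn_const).congr fun _ hx ↦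
    dTh_eq_fderiv (differentiableAt_of_contDiffOn_positiveTemp hf hmn hx)

lemma hessian_uncurry_fst (hf : ContDiffOn ℝ 2 (Function.uncurry f) (positiveTemp Xi))
    (hθ : 0 < θ) (u : Xi) :
    fderiv ℝ (fderiv ℝ (Function.uncurry f)) (ξ, θ) (u, 0) (u, 0)
      = ∑ A : Idx, ∑ B : Idx, dXi A (dXi B f) ξ θ * xiComp u A * xiComp u B := by
  have hx := mk_mem_positiveTemp hθ ξ
  have hcol (B : Idx) : fderiv ℝ (fderiv ℝ (Function.uncurry f)) (ξ, θ) (u, 0) (xiBasis B, 0)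
      = ∑ A : Idx, dXi A (dXi B f) ξ θ * xiComp u A := by
    rw [fderiv_fderiv_apply_of_eqOn (g := Function.uncurry (dXi B f)) isOpen_positiveTemp hx hf
        fun y hy ↦ dXi_eq_fderiv (differentiableAt_of_contDiffOn_positiveTemp hf
          one_add_one_eq_two.le hy) B,
      fderiv_uncurry_apply (differentiableAt_of_contDiffOn_positiveTemp
        (contDiffOn_uncurry_dXi hf one_add_one_eq_two.le B) (zero_add 1).le hx), mul_zero, add_zero]
  calc fderiv ℝ (fderiv ℝ (Function.uncurry f)) (ξ, θ) (u, 0) (u, 0)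
      = ∑ B : Idx, xiComp u B * fderiv ℝ (fderiv ℝ (Function.uncurry f)) (ξ, θ) (u, 0)
          (xiBasis B, 0) := by
        conv_lhs => arg 2; rw [mk_zero_eq_sum_smul_xiBasis u]
        simp only [map_sum, map_smul, smul_eq_mul]
    _ = ∑ A : Idx, ∑ B : Idx, dXi A (dXi B f) ξ θ * xiComp u A * xiComp u B := by
        rw [Finset.sum_comm]
        simp only [hcol, Finset.mul_sum, mul_comm]

lemma hessian_uncurry_snd (hf : ContDiffOn ℝ 2 (Function.uncurry f) (positiveTemp Xi))
    (hθ : 0 < θ) :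
    fderiv ℝ (fderiv ℝ (Function.uncurry f)) (ξ, θ) (0, 1) (0, 1) = -dTh (etaHat f) ξ θ := by
  have hx := mk_mem_positiveTemp hθ ξ
  have hdTh : DifferentiableAt ℝ (Function.uncurry (dTh f)) (ξ, θ) :=
    differentiableAt_of_contDiffOn_positiveTemp
      (contDiffOn_uncurry_dTh hf one_add_one_eq_two.le) (zero_add 1).le hx
  rw [fderiv_fderiv_apply_of_eqOn (g := Function.uncurry (dTh f)) isOpen_positiveTemp hx hf
      fun y hy ↦ dTh_eq_fderiv (differentiableAt_of_contDiffOn_positiveTemp hf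
        one_add_one_eq_two.le hy), ← dTh_eq_fderiv hdTh]
  simp [dTh, etaHat, deriv.fun_neg]

end Coordinates

lemma isStableFreeEnergy_uncurry {ψ : Xi → ℝ → ℝ}
    (hψ : ContDiffOn ℝ 2 (Function.uncurry ψ) (positiveTemp Xi)) (hconv : PsiConvex ψ) :
    IsStableFreeEnergy (Function.uncurry ψ) where
  contDiffOn := hψ
  hessian_fst_pos := by
    rintro ⟨ξ, θ⟩ ⟨-, hθ⟩ u hu
    rw [hessian_uncurry_fst hψ hθ]
    refine (hconv ξ θ hθ).1 _ fun h ↦ hu ?_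
    rw [← sum_xiComp_smul_xiBasis u, h]
    simp only [Pi.zero_apply, zero_smul, Finset.sum_const_zero]
  hessian_snd_neg := by
    rintro ⟨ξ, θ⟩ ⟨-, hθ⟩
    rw [hessian_uncurry_snd hψ hθ]
    exact neg_neg_of_pos (hconv ξ θ hθ).2

lemma etaHat_eq_freeEntropy {ψ : Xi → ℝ → ℝ} {ξ : Xi} {θ : ℝ}
    (hψ : DifferentiableAt ℝ (Function.uncurry ψ) (ξ, θ)) :
    etaHat ψ ξ θ = freeEntropy (Function.uncurry ψ) (ξ, θ) := by
  rw [etaHat, dTh_eq_fderiv hψ, freeEntropy]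

lemma eHat_eq_internalEnergy {ψ : Xi → ℝ → ℝ} {ξ : Xi} {θ : ℝ}
    (hψ : DifferentiableAt ℝ (Function.uncurry ψ) (ξ, θ)) :
    eHat ψ ξ θ = internalEnergy (Function.uncurry ψ) (ξ, θ) := by
  rw [internalEnergy, ← etaHat_eq_freeEntropy hψ, eHat, etaHat, Function.uncurry_apply_pair]
  ring

lemma relEnt_eq_relEntropy_add {ψ : Xi → ℝ → ℝ} {ξ ξ' : Xi} {θ θ' : ℝ} (v v' : Vec3)
    (hψ : DifferentiableAt ℝ (Function.uncurry ψ) (ξ, θ))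
    (hψ' : DifferentiableAt ℝ (Function.uncurry ψ) (ξ', θ')) :
    relEnt ψ ξ v θ ξ' v' θ'
      = relEntropy (Function.uncurry ψ) (ξ, θ) (ξ', θ') + 1 / 2 * ∑ i, (v i - v' i) ^ 2 := by
  rw [relEnt, relEntropy, ← sub_sub_sum_dXi_eq_taylorRemainder hψ', psiRel,
    ← etaHat_eq_freeEntropy hψ, ← etaHat_eq_freeEntropy hψ', etaHat]
  ring

section NullLagrangians

/-- The degree of `∂Φ^B/∂F` as a homogeneous polynomial in `F`. -/
def phiDegree : Idx → ℕ
  | .inl _ => 0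
  | .inr (.inl _) => 1
  | .inr (.inr _) => 2

lemma phiDegree_le_two (B : Idx) : phiDegree B ≤ 2 := by
  rcases B with _ | _ | _ <;> simp [phiDegree]

lemma contDiff_xiComp_Phi3 {n : WithTop ℕ∞} (B : Idx) :
    ContDiff ℝ n fun F ↦ xiComp (Phi3 F) B := by
  rcases B with _ | _ | _ <;> simp only [xiComp, Phi3, cof3, det3] <;> fun_prop

lemma xiComp_Phi3_smul (B : Idx) (t : ℝ) (F : Mat3) :
    xiComp (Phi3 (t • F)) B = t ^ (phiDegree B + 1) • xiComp (Phi3 F) B := by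
  rcases B with _ | _ | _
  · simp [xiComp, Phi3, phiDegree]
  · simp only [xiComp, Phi3, cof3, phiDegree, Pi.smul_apply, smul_eq_mul, Finset.mul_sum]
    congr! 4
    ring
  · simp only [xiComp, Phi3, det3, phiDegree, Pi.smul_apply, smul_eq_mul, Finset.mul_sum]
    congr! 6
    ring

lemma updMat_eq_add_smul (F : Mat3) (i α : Fin 3) (s : ℝ) :
    updMat F i α s = F + (s - F i α) • updMat 0 i α 1 := by
  ext
  simp [updMat_apply]

lemma dPhi_eq_fderiv (B : Idx) (i α : Fin 3) (F : Mat3) :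
    dPhi B i α F = fderiv ℝ (fun F ↦ xiComp (Phi3 F) B) F (updMat 0 i α 1) := by
  rw [← deriv_comp_add_sub_smul ((contDiff_xiComp_Phi3 B).differentiable one_ne_zero F) _ (F i α),
    dPhi]
  simp only [← updMat_eq_add_smul]

lemma contDiff_dPhi {n : ℕ} (B : Idx) (i α : Fin 3) : ContDiff ℝ n (dPhi B i α) := by
  rw [funext (dPhi_eq_fderiv B i α)]
  exact ((contDiff_xiComp_Phi3 (n := n + 1) B).fderiv_right le_rfl).clm_apply contDiff_const

lemma dPhi_isBigO (B : Idx) (i α : Fin 3) :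
    dPhi B i α =O[⊤] fun F ↦ (1 + ‖F‖) ^ phiDegree B := by
  rw [funext (dPhi_eq_fderiv B i α)]
  refine IsBigO.trans (.of_bound ‖updMat 0 i α 1‖ (.of_forall fun F ↦ ?_))
    (fderiv_isBigO_of_homogeneous (contDiff_xiComp_Phi3 B) (xiComp_Phi3_smul B))
  rw [mul_comm]
  exact ContinuousLinearMap.le_opNorm _ _

end NullLagrangians

section Growth

/-- The growth function `|ξ|_{p,q,r} + θ ^ ℓ` on thermodynamic states `(ξ, θ)`. -/
def growthFun (p q r ℓ : ℝ) (x : Xi × ℝ) : ℝ := xiNorm p q r x.1 + x.2 ^ ℓ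

/-- The one-sided form of `GrowthCond`: the internal energy is only bounded from below, and the
stress terms are only assumed to be `O`, instead of `o`, of the growth function. -/
structure OneSidedGrowthCond (ψ : Xi → ℝ → ℝ) (p q r ℓ : ℝ) : Prop where
  le_eHat : ∃ c > 0, ∀ ξ : Xi, ∀ θ > 0, c * growthFun p q r ℓ (ξ, θ) - c ≤ eHat ψ ξ θ
  stress_le : ∃ A R, ∀ ξ : Xi, ∀ θ > 0, R < growthFun p q r ℓ (ξ, θ) →
    gradFnorm ψ ξ θ + gradZnorm ψ ξ θ ^ (p / (p - 1)) + gradWnorm ψ ξ θ ^ (p / (p - 2))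
      ≤ A * growthFun p q r ℓ (ξ, θ)
  dTh_sublinear : ∀ ε > 0, ∃ R, ∀ ξ : Xi, ∀ θ > 0, R < growthFun p q r ℓ (ξ, θ) →
    |dTh ψ ξ θ| ≤ ε * growthFun p q r ℓ (ξ, θ)

variable {ψ : Xi → ℝ → ℝ} {c p q r ℓ : ℝ}

lemma GrowthCond.oneSided (h : GrowthCond ψ c p q r ℓ) : OneSidedGrowthCond ψ p q r ℓ :=
  ⟨⟨c, h.1, fun ξ θ hθ ↦ (h.2.1 ξ θ hθ).1⟩, ⟨1, h.2.2.1 1 one_pos⟩, h.2.2.2⟩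

lemma exists_le_mul_rpow_add (hp : 1 < p) {ε : ℝ} (hε : 0 < ε) :
    ∃ C, ∀ x ≥ 0, x ≤ ε * x ^ p + C := by
  have hp' : 0 < p - 1 := sub_pos.2 hp
  refine ⟨ε⁻¹ ^ (p - 1)⁻¹, fun x hx ↦ ?_⟩
  rcases le_or_gt x (ε⁻¹ ^ (p - 1)⁻¹) with h | h
  · exact h.trans (le_add_of_nonneg_left (by positivity))
  · have hx₀ : 0 < x := lt_of_le_of_lt (by positivity) h
    have hpow : ε⁻¹ ≤ x ^ (p - 1) := (Real.rpow_inv_le_iff_of_pos (by positivity) hx hp').1 h.le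
    have hxp : x ^ p = x ^ (p - 1) * x := by rw [← Real.rpow_add_one hx₀.ne', sub_add_cancel]
    have hone : 1 ≤ ε * x ^ (p - 1) := (inv_le_iff_one_le_mul₀' hε).1 hpow
    calc x ≤ ε * x ^ (p - 1) * x := le_mul_of_one_le_left hx hone
      _ = ε * x ^ p := by rw [hxp, mul_assoc]
      _ ≤ ε * x ^ p + ε⁻¹ ^ (p - 1)⁻¹ := le_add_of_nonneg_right (by positivity)

lemma self_le_rpow_add_one (hp : 1 ≤ p) {x : ℝ} (hx : 0 ≤ x) : x ≤ x ^ p + 1 := by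
  rcases le_total x 1 with h | h
  · exact h.trans (le_add_of_nonneg_left (by positivity))
  · exact (Real.self_le_rpow_of_one_le h hp).trans (le_add_of_nonneg_right zero_le_one)

lemma mnorm_nonneg (F : Mat3) : 0 ≤ mnorm F := Real.sqrt_nonneg _

lemma abs_le_mnorm (F : Mat3) (i j : Fin 3) : |F i j| ≤ mnorm F := by
  refine Real.abs_le_sqrt ?_
  exact (Finset.single_le_sum (f := fun j ↦ F i j ^ 2) (fun _ _ ↦ sq_nonneg _)
    (Finset.mem_univ j)).trans (Finset.single_le_sum (f := fun i ↦ ∑ j, F i j ^ 2)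
      (fun _ _ ↦ Finset.sum_nonneg fun _ _ ↦ sq_nonneg _) (Finset.mem_univ i))

lemma norm_le_mnorm (F : Mat3) : ‖F‖ ≤ mnorm F :=
  (pi_norm_le_iff_of_nonneg (mnorm_nonneg F)).2 fun i ↦
    (pi_norm_le_iff_of_nonneg (mnorm_nonneg F)).2 fun j ↦ abs_le_mnorm F i j

lemma growthFun_nonneg {x : Xi × ℝ} (hx : x ∈ positiveTemp Xi) : 0 ≤ growthFun p q r ℓ x := by
  have h₁ := mnorm_nonneg x.1.1
  have h₂ := mnorm_nonneg x.1.2.1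
  have hθ : 0 < x.2 := hx.2
  rw [growthFun, xiNorm]
  positivity

lemma mnorm_rpow_le_growthFun {x : Xi × ℝ} (hx : x ∈ positiveTemp Xi) :
    mnorm x.1.1 ^ p ≤ growthFun p q r ℓ x := by
  have h₂ := mnorm_nonneg x.1.2.1
  have hθ : 0 < x.2 := hx.2
  rw [growthFun, xiNorm, add_assoc, add_assoc]
  exact le_add_of_nonneg_right (by positivity)

lemma growthFun_fst_sublinear (hp : 1 < p) (hq : 1 < q) (hr : 1 < r) (ℓ : ℝ) {ε : ℝ}
    (hε : 0 < ε) :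
    ∃ C, ∀ x ∈ positiveTemp Xi, ‖x.1‖ ≤ ε * growthFun p q r ℓ x + C := by
  obtain ⟨A, hA⟩ := exists_le_mul_rpow_add hp hε
  obtain ⟨B, hB⟩ := exists_le_mul_rpow_add hq hε
  obtain ⟨C, hC⟩ := exists_le_mul_rpow_add hr hε
  refine ⟨A + B + C, ?_⟩
  rintro ⟨⟨F, ζ, w⟩, θ⟩ ⟨-, hθ : 0 < θ⟩
  have hnorm : ‖(F, ζ, w)‖ ≤ mnorm F + mnorm ζ + |w| := by
    have := norm_le_mnorm F
    have := norm_le_mnorm ζ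
    refine norm_prod_le_iff.2 ⟨?_, norm_prod_le_iff.2 ⟨?_, ?_⟩⟩ <;>
      linarith [mnorm_nonneg F, mnorm_nonneg ζ, abs_nonneg w, Real.norm_eq_abs w]
  have hθℓ : 0 ≤ ε * θ ^ ℓ := by positivity
  simp only [growthFun, xiNorm]
  linarith [hA _ (mnorm_nonneg F), hB _ (mnorm_nonneg ζ), hC _ (abs_nonneg w)]

lemma snd_le_growthFun_add_one (hl : 1 ≤ ℓ) {x : Xi × ℝ} (hx : x ∈ positiveTemp Xi) :
    x.2 ≤ growthFun p q r ℓ x + 1 := by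
  have h₁ := mnorm_nonneg x.1.1
  have h₂ := mnorm_nonneg x.1.2.1
  have hξ : 0 ≤ xiNorm p q r x.1 := by
    rw [xiNorm]
    positivity
  rw [growthFun]
  linarith [self_le_rpow_add_one hl (le_of_lt hx.2)]

lemma OneSidedGrowthCond.isCoerciveFreeEnergy (h : OneSidedGrowthCond ψ p q r ℓ)
    (hψ : ContDiffOn ℝ 1 (Function.uncurry ψ) (positiveTemp Xi))
    (hp : 1 < p) (hq : 1 < q) (hr : 1 < r) (hl : 1 ≤ ℓ) :
    IsCoerciveFreeEnergy (Function.uncurry ψ) (growthFun p q r ℓ) where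
  nonneg _ hx := growthFun_nonneg hx
  norm_le := by
    obtain ⟨C, hC⟩ := growthFun_fst_sublinear hp hq hr ℓ one_pos
    refine ⟨max C 1, fun x hx ↦ norm_prod_le_iff.2 ⟨?_, ?_⟩⟩
    · linarith [hC x hx, le_max_left C 1]
    · rw [Real.norm_of_nonneg (le_of_lt hx.2)]
      exact (snd_le_growthFun_add_one hl hx).trans (by gcongr; exact le_max_right C 1)
  fst_sublinear _ hε := growthFun_fst_sublinear hp hq hr ℓ hε
  le_internalEnergy := by
    obtain ⟨c, hc, hle⟩ := h.le_eHat
    refine ⟨c, hc, fun x hx ↦ (hle x.1 x.2 hx.2).trans_eq (eHat_eq_internalEnergy ?_)⟩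
    exact differentiableAt_of_contDiffOn_positiveTemp hψ (zero_add 1).le hx
  freeEntropy_sublinear := by
    intro ε hε
    obtain ⟨R, hR⟩ := h.dTh_sublinear ε hε
    refine ⟨R, fun x hx hxR ↦ ?_⟩
    rw [← etaHat_eq_freeEntropy (differentiableAt_of_contDiffOn_positiveTemp hψ
      (zero_add 1).le hx), etaHat, abs_neg]
    exact hR x.1 x.2 hx.2 hxR

lemma one_add_norm_isBigO_growthWeight_rpow
    (hN : IsCoerciveFreeEnergy (Function.uncurry ψ) (growthFun p q r ℓ)) (hp : 0 < p) :
    (fun x : Xi × ℝ ↦ 1 + ‖x.1.1‖) =O[𝓟 (positiveTemp Xi)]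
      fun x ↦ growthWeight (Function.uncurry ψ) (growthFun p q r ℓ) x ^ p⁻¹ := by
  refine .of_bound 2 (eventually_principal.2 fun x hx ↦ ?_)
  have hW := hN.one_le_growthWeight hx
  have hone := Real.one_le_rpow hW (inv_nonneg.2 hp.le)
  have hF : ‖x.1.1‖ ≤ growthWeight (Function.uncurry ψ) (growthFun p q r ℓ) x ^ p⁻¹ := by
    refine (norm_le_mnorm _).trans ((Real.le_rpow_inv_iff_of_pos (mnorm_nonneg _)
      (zero_le_one.trans hW) hp).2 ?_)
    exact (mnorm_rpow_le_growthFun hx).trans (IsCoerciveFreeEnergy.le_growthWeight _ _ x)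
  rw [Real.norm_of_nonneg (by positivity), Real.norm_of_nonneg (zero_le_one.trans hone)]
  linarith

lemma dPhi_isBigO_growthWeight_rpow
    (hN : IsCoerciveFreeEnergy (Function.uncurry ψ) (growthFun p q r ℓ)) (hp : 0 < p)
    (B : Idx) (i α : Fin 3) :
    (fun x : Xi × ℝ ↦ dPhi B i α x.1.1) =O[𝓟 (positiveTemp Xi)]
      fun x ↦ growthWeight (Function.uncurry ψ) (growthFun p q r ℓ) x ^ (phiDegree B / p) := by
  refine (((dPhi_isBigO B i α).comp_tendsto tendsto_top).trans
    ((one_add_norm_isBigO_growthWeight_rpow hN hp).pow (phiDegree B))).congr' .rfl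
      (eventually_principal.2 fun x hx ↦ ?_)
  dsimp only
  rw [← Real.rpow_mul_natCast (zero_le_one.trans (hN.one_le_growthWeight hx)), inv_mul_eq_div]

lemma abs_dXi_rpow_le_stress (hp : 2 < p) (B : Idx) (ξ : Xi) (θ : ℝ) :
    |dXi B ψ ξ θ| ^ (p / (p - phiDegree B)) ≤
      gradFnorm ψ ξ θ + gradZnorm ψ ξ θ ^ (p / (p - 1)) + gradWnorm ψ ξ θ ^ (p / (p - 2)) := by
  have hF : 0 ≤ gradFnorm ψ ξ θ := Real.sqrt_nonneg _
  have hZ : 0 ≤ gradZnorm ψ ξ θ := Real.sqrt_nonneg _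
  have hW : 0 ≤ gradWnorm ψ ξ θ := abs_nonneg _
  have hZ' : 0 ≤ gradZnorm ψ ξ θ ^ (p / (p - 1)) := by positivity
  have hW' : 0 ≤ gradWnorm ψ ξ θ ^ (p / (p - 2)) := by positivity
  rcases B with ⟨i, α⟩ | ⟨i, α⟩ | _
  · have hle : |dXi (.inl (i, α)) ψ ξ θ| ≤ gradFnorm ψ ξ θ :=
      abs_le_mnorm (fun i α ↦ dXi (.inl (i, α)) ψ ξ θ) i α
    rw [phiDegree, Nat.cast_zero, sub_zero, div_self (by linarith), Real.rpow_one]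
    linarith
  · have hle : |dXi (.inr (.inl (i, α))) ψ ξ θ| ≤ gradZnorm ψ ξ θ :=
      abs_le_mnorm (fun i α ↦ dXi (.inr (.inl (i, α))) ψ ξ θ) i α
    have := Real.rpow_le_rpow (abs_nonneg _) hle
      (div_nonneg (by linarith : 0 ≤ p) (by linarith : 0 ≤ p - 1))
    rw [phiDegree, Nat.cast_one]
    linarith
  · rw [phiDegree, Nat.cast_ofNat]
    exact le_add_of_nonneg_left (add_nonneg hF hZ')

lemma OneSidedGrowthCond.abs_dXi_le (h : OneSidedGrowthCond ψ p q r ℓ) (hp : 2 < p) (B : Idx) :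
    ∃ A R, ∀ ξ : Xi, ∀ θ > 0, R < growthFun p q r ℓ (ξ, θ) →
      |dXi B ψ ξ θ| ≤ A * growthFun p q r ℓ (ξ, θ) ^ (1 - phiDegree B / p) := by
  obtain ⟨A, R, hAR⟩ := h.stress_le
  have hdeg : (phiDegree B : ℝ) ≤ 2 := mod_cast phiDegree_le_two B
  have hexp : 1 - phiDegree B / p = (p / (p - phiDegree B))⁻¹ := by
    rw [inv_div, one_sub_div (by linarith)]
  refine ⟨|A| ^ (1 - phiDegree B / p), R, fun ξ θ hθ hR ↦ ?_⟩
  have hN : 0 ≤ growthFun p q r ℓ (ξ, θ) := growthFun_nonneg (mk_mem_positiveTemp hθ ξ)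
  rw [← Real.mul_rpow (abs_nonneg A) hN, hexp, Real.le_rpow_inv_iff_of_pos (abs_nonneg _)
    (by positivity) (div_pos (by linarith) (by linarith))]
  exact (abs_dXi_rpow_le_stress hp B ξ θ).trans ((hAR ξ θ hθ hR).trans
    (by gcongr; exact le_abs_self A))

lemma OneSidedGrowthCond.dXi_isBigO_growthWeight_rpow (h : OneSidedGrowthCond ψ p q r ℓ)
    (hψ : IsStableFreeEnergy (Function.uncurry ψ))
    (hN : IsCoerciveFreeEnergy (Function.uncurry ψ) (growthFun p q r ℓ)) (hp : 2 < p) (B : Idx) :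
    Function.uncurry (dXi B ψ) =O[𝓟 (positiveTemp Xi)]
      fun x ↦ growthWeight (Function.uncurry ψ) (growthFun p q r ℓ) x ^ (1 - phiDegree B / p) := by
  obtain ⟨A, R, hAR⟩ := h.abs_dXi_le hp B
  have hdXi : ∀ x ∈ positiveTemp Xi,
      Function.uncurry (dXi B ψ) x = fderiv ℝ (Function.uncurry ψ) x (xiBasis B, 0) := fun x hx ↦
    dXi_eq_fderiv (differentiableAt_of_contDiffOn_positiveTemp hψ.contDiffOn
      one_add_one_eq_two.le hx) B
  have hdeg : (phiDegree B : ℝ) ≤ 2 := mod_cast phiDegree_le_two B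
  have hs : 0 ≤ 1 - phiDegree B / p :=
    sub_nonneg.2 ((div_le_one (by linarith)).2 (hdeg.trans hp.le))
  refine (hN.stress_isBigO_growthWeight_rpow hψ hs (A := A) (R := R) fun x hx hR ↦ ?_).congr'
    (eventually_principal.2 fun x hx ↦ (hdXi x hx).symm) .rfl
  rw [← hdXi x hx]
  exact hAR x.1 x.2 hx.2 hR

end Growth

section StatePairs

lemma mul_isBigO_of_sq_isBigO {X : Type*} {l : Filter X} {f g h : X → ℝ}
    (hf : (fun x ↦ f x ^ 2) =O[l] h) (hg : (fun x ↦ g x ^ 2) =O[l] h) :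
    (fun x ↦ f x * g x) =O[l] h := by
  refine (IsBigO.of_bound' (.of_forall fun x ↦ ?_)).trans (hf.add hg)
  rw [Real.norm_eq_abs, Real.norm_of_nonneg (by positivity : 0 ≤ f x ^ 2 + g x ^ 2), abs_mul,
    ← sq_abs (f x), ← sq_abs (g x)]
  nlinarith [two_mul_le_add_sq |f x| |g x|, mul_nonneg (abs_nonneg (f x)) (abs_nonneg (g x))]

lemma sqrt_sum_sq_isBigO {ι X : Type*} [Fintype ι] {l : Filter X} {f : ι → X → ℝ} {g : X → ℝ}
    (hf : ∀ i, f i =O[l] g) : (fun x ↦ √(∑ i, f i x ^ 2)) =O[l] g := by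
  have hsq : (fun x ↦ ∑ i, f i x ^ 2) =O[l] fun x ↦ g x ^ 2 := .fun_sum fun i _ ↦ (hf i).pow 2
  exact (hsq.sqrt (.of_forall fun x ↦ sq_nonneg (g x))).trans
    (.of_bound' (.of_forall fun x ↦ by simp [Real.sqrt_sq_eq_abs]))

lemma exists_pos_forall_norm_le_of_isBigO {X F : Type*} [Norm F] {s : Set X} {f : X → F}
    {g : X → ℝ} (hfg : f =O[𝓟 s] g) (hg : ∀ x ∈ s, 0 ≤ g x) :
    ∃ C > 0, ∀ x ∈ s, ‖f x‖ ≤ C * g x := by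
  obtain ⟨C, hC, hle⟩ := hfg.exists_pos
  refine ⟨C, hC, fun x hx ↦ ?_⟩
  simpa only [Real.norm_of_nonneg (hg x hx)] using isBigOWith_principal.1 hle x hx

lemma exists_pos_forall_forall_norm_le_of_isBigO {ι X : Type*} {F : ι → Type*} [Finite ι]
    [∀ i, SeminormedAddCommGroup (F i)] {s : Set X} {f : X → ∀ i, F i} {g : X → ℝ}
    (hfg : ∀ i, (fun x ↦ f x i) =O[𝓟 s] g) (hg : ∀ x ∈ s, 0 ≤ g x) :
    ∃ C > 0, ∀ x ∈ s, ∀ i, ‖f x i‖ ≤ C * g x := by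
  have := Fintype.ofFinite ι
  obtain ⟨C, hC, hle⟩ := exists_pos_forall_norm_le_of_isBigO (isBigO_pi.2 hfg) hg
  exact ⟨C, hC, fun x hx i ↦ (norm_le_pi_norm _ i).trans (hle x hx)⟩

/-- The thermodynamic part `(ξ, θ)` of the state `(ξ, v, θ)`. -/
def thermoState (U : FullState) : Xi × ℝ := (U.1, U.2.2)

/-- The pairs of a state of positive temperature and a reference state in `Γ_{M,δ}`. -/
def admissiblePairs (M δ : ℝ) : Set (FullState × FullState) := {U | 0 < U.2.2} ×ˢ Gamma M δ

/-- The relative entropy `I`, as a function of the pair of states. -/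
def relEntPair (ψ : Xi → ℝ → ℝ) (z : FullState × FullState) : ℝ :=
  relEnt ψ z.1.1 z.1.2.1 z.1.2.2 z.2.1 z.2.2.1 z.2.2.2

variable {ψ : Xi → ℝ → ℝ} {M δ : ℝ}

lemma thermoState_mem_stateBox {U : FullState} (hU : U ∈ Gamma M δ) :
    thermoState U ∈ stateBox Xi M δ := by
  obtain ⟨hF, hζ, hw, -, hθ⟩ := hU
  refine ⟨mem_closedBall_zero_iff.2 (norm_prod_le_iff.2 ⟨?_, norm_prod_le_iff.2 ⟨?_, hw⟩⟩), hθ⟩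
  · exact (norm_le_mnorm _).trans hF
  · exact (norm_le_mnorm _).trans hζ

lemma thermoState_mem_of_mem_admissiblePairs {z : FullState × FullState}
    (hz : z ∈ admissiblePairs M δ) :
    (thermoState z.1, thermoState z.2) ∈ positiveTemp Xi ×ˢ stateBox Xi M δ :=
  ⟨mk_mem_positiveTemp hz.1 _, thermoState_mem_stateBox hz.2⟩

lemma relEntPair_eq (hψ : IsStableFreeEnergy (Function.uncurry ψ)) (hδ : 0 < δ)
    {z : FullState × FullState} (hz : z ∈ admissiblePairs M δ) :
    relEntPair ψ z = relEntropy (Function.uncurry ψ) (thermoState z.1) (thermoState z.2)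
      + 1 / 2 * ∑ i, (z.1.2.1 i - z.2.2.1 i) ^ 2 := by
  obtain ⟨hx, hy⟩ := thermoState_mem_of_mem_admissiblePairs hz
  have hdiff {x : Xi × ℝ} (hx : x ∈ positiveTemp Xi) :
      DifferentiableAt ℝ (Function.uncurry ψ) x :=
    differentiableAt_of_contDiffOn_positiveTemp hψ.contDiffOn one_add_one_eq_two.le hx
  exact relEnt_eq_relEntropy_add _ _ (hdiff hx) (hdiff (stateBox_subset_positiveTemp M hδ hy))

lemma relEntropy_thermoState_nonneg (hψ : IsStableFreeEnergy (Function.uncurry ψ)) (hδ : 0 < δ)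
    {z : FullState × FullState} (hz : z ∈ admissiblePairs M δ) :
    0 ≤ relEntropy (Function.uncurry ψ) (thermoState z.1) (thermoState z.2) :=
  have hxy := thermoState_mem_of_mem_admissiblePairs hz
  hψ.relEntropy_nonneg hxy.1 (stateBox_subset_positiveTemp M hδ hxy.2)

lemma relEntPair_nonneg (hψ : IsStableFreeEnergy (Function.uncurry ψ)) (hδ : 0 < δ)
    {z : FullState × FullState} (hz : z ∈ admissiblePairs M δ) : 0 ≤ relEntPair ψ z := by
  rw [relEntPair_eq hψ hδ hz]
  exact add_nonneg (relEntropy_thermoState_nonneg hψ hδ hz) (by positivity)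

lemma comp_thermoState_isBigO_relEntPair {F : Type*} [Norm F]
    {φ : (Xi × ℝ) × (Xi × ℝ) → F} (hψ : IsStableFreeEnergy (Function.uncurry ψ)) (hδ : 0 < δ)
    (hφ : φ =O[𝓟 (positiveTemp Xi ×ˢ stateBox Xi M δ)]
      fun z ↦ relEntropy (Function.uncurry ψ) z.1 z.2) :
    (fun z ↦ φ (thermoState z.1, thermoState z.2)) =O[𝓟 (admissiblePairs M δ)]
      relEntPair ψ := by
  refine (hφ.comp_tendsto (tendsto_principal_principal.2
    fun _ hz ↦ thermoState_mem_of_mem_admissiblePairs hz)).trans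
    (.of_bound' (eventually_principal.2 fun z hz ↦ ?_))
  have hnonneg := relEntropy_thermoState_nonneg hψ hδ hz
  rw [Real.norm_of_nonneg (relEntPair_nonneg hψ hδ hz), relEntPair_eq hψ hδ hz]
  exact (Real.norm_of_nonneg hnonneg).trans_le (le_add_of_nonneg_right (by positivity))

lemma velocity_sub_sq_isBigO_relEntPair (hψ : IsStableFreeEnergy (Function.uncurry ψ))
    (hδ : 0 < δ) (i : Fin 3) :
    (fun z ↦ (z.1.2.1 i - z.2.2.1 i) ^ 2) =O[𝓟 (admissiblePairs M δ)] relEntPair ψ := by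
  refine .of_bound 2 (eventually_principal.2 fun z hz ↦ ?_)
  have hsum : (z.1.2.1 i - z.2.2.1 i) ^ 2 ≤ ∑ j, (z.1.2.1 j - z.2.2.1 j) ^ 2 :=
    Finset.single_le_sum (f := fun j ↦ (z.1.2.1 j - z.2.2.1 j) ^ 2) (fun _ _ ↦ sq_nonneg _)
      (Finset.mem_univ i)
  rw [Real.norm_of_nonneg (sq_nonneg _), Real.norm_of_nonneg (relEntPair_nonneg hψ hδ hz),
    relEntPair_eq hψ hδ hz]
  linarith [relEntropy_thermoState_nonneg hψ hδ hz]

end StatePairs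

section UpperBounds

variable {ψ : Xi → ℝ → ℝ} {p q r ℓ M δ : ℝ}

lemma taylorRemainder_isBigO_relEntPair {N : Xi × ℝ → ℝ} {f : Xi → ℝ → ℝ}
    (hψ : IsStableFreeEnergy (Function.uncurry ψ))
    (hN : IsCoerciveFreeEnergy (Function.uncurry ψ) N) (hδ : 0 < δ)
    (hf : ContDiffOn ℝ 2 (Function.uncurry f) (positiveTemp Xi))
    (hfW : Function.uncurry f =O[𝓟 (positiveTemp Xi)] growthWeight (Function.uncurry ψ) N) :
    (fun z ↦ taylorRemainder (Function.uncurry f) (thermoState z.1) (thermoState z.2))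
      =O[𝓟 (admissiblePairs M δ)] relEntPair ψ := by
  obtain ⟨K, hI⟩ := hN.exists_controlsDeviation hψ M hδ
  exact comp_thermoState_isBigO_relEntPair hψ hδ (hI.taylorRemainder_isBigO hf hfW)

lemma etaRel_isBigO_relEntPair {N : Xi × ℝ → ℝ} (hψ3 : PsiC3 ψ)
    (hψ : IsStableFreeEnergy (Function.uncurry ψ))
    (hN : IsCoerciveFreeEnergy (Function.uncurry ψ) N) (hδ : 0 < δ) :
    (fun z ↦ etaRel ψ z.1.1 z.1.2.2 z.2.1 z.2.2.2) =O[𝓟 (admissiblePairs M δ)]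
      relEntPair ψ := by
  have hη : ContDiffOn ℝ 2 (Function.uncurry (etaHat ψ)) (positiveTemp Xi) :=
    (contDiffOn_uncurry_dTh hψ3 two_add_one_eq_three.le).neg
  have hηW : Function.uncurry (etaHat ψ) =O[𝓟 (positiveTemp Xi)]
      growthWeight (Function.uncurry ψ) N :=
    hN.freeEntropy_isBigO_growthWeight.congr' (eventually_principal.2 fun x hx ↦
      (etaHat_eq_freeEntropy (differentiableAt_of_contDiffOn_positiveTemp hψ.contDiffOn
        one_add_one_eq_two.le hx)).symm) .rfl
  refine (taylorRemainder_isBigO_relEntPair hψ hN hδ hη hηW).congr'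
    (eventually_principal.2 fun z hz ↦ ?_) .rfl
  exact (sub_sub_sum_dXi_eq_taylorRemainder (differentiableAt_of_contDiffOn_positiveTemp hη
    one_add_one_eq_two.le (mk_mem_positiveTemp (hδ.trans_le hz.2.2.2.2.2.1) _))).symm

lemma dXiRel_isBigO_relEntPair (hψ3 : PsiC3 ψ)
    (hψ : IsStableFreeEnergy (Function.uncurry ψ)) (hgrow : OneSidedGrowthCond ψ p q r ℓ)
    (hN : IsCoerciveFreeEnergy (Function.uncurry ψ) (growthFun p q r ℓ)) (hp : 2 < p)
    (hδ : 0 < δ) (B : Idx) :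
    (fun z ↦ dXiRel B ψ z.1.1 z.1.2.2 z.2.1 z.2.2.2) =O[𝓟 (admissiblePairs M δ)]
      relEntPair ψ := by
  have hstress : ContDiffOn ℝ 2 (Function.uncurry (dXi B ψ)) (positiveTemp Xi) :=
    contDiffOn_uncurry_dXi hψ3 two_add_one_eq_three.le B
  have hstressW : Function.uncurry (dXi B ψ) =O[𝓟 (positiveTemp Xi)]
      growthWeight (Function.uncurry ψ) (growthFun p q r ℓ) := by
    refine (hgrow.dXi_isBigO_growthWeight_rpow hψ hN hp B).trans
      (.of_bound' (eventually_principal.2 fun x hx ↦ ?_))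
    have hW := hN.one_le_growthWeight hx
    have hs : 1 - phiDegree B / p ≤ 1 := sub_le_self _ (by positivity)
    rw [Real.norm_of_nonneg (by positivity), Real.norm_of_nonneg (by positivity)]
    exact (Real.rpow_le_rpow_of_exponent_le hW hs).trans_eq (Real.rpow_one _)
  refine (taylorRemainder_isBigO_relEntPair hψ hN hδ hstress hstressW).congr'
    (eventually_principal.2 fun z hz ↦ ?_) .rfl
  exact (sub_sub_sum_dXi_eq_taylorRemainder (differentiableAt_of_contDiffOn_positiveTemp hstress
    one_add_one_eq_two.le (mk_mem_positiveTemp (hδ.trans_le hz.2.2.2.2.2.1) _))).symm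

lemma contDiffOn_dPhi_fst (B : Idx) (i α : Fin 3) :
    ContDiffOn ℝ 1 (fun x : Xi × ℝ ↦ dPhi B i α x.1.1) (positiveTemp Xi) :=
  ((contDiff_dPhi (n := 1) B i α).comp (contDiff_fst.comp contDiff_fst)).contDiffOn

lemma dPhi_sub_mul_dXi_sub_isBigO_relEntPair (hψ : IsStableFreeEnergy (Function.uncurry ψ))
    (hgrow : OneSidedGrowthCond ψ p q r ℓ)
    (hN : IsCoerciveFreeEnergy (Function.uncurry ψ) (growthFun p q r ℓ)) (hp : 2 < p)
    (hδ : 0 < δ) (B : Idx) (i α : Fin 3) :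
    (fun z : FullState × FullState ↦ (dPhi B i α z.1.1.1 - dPhi B i α z.2.1.1)
        * (dXi B ψ z.1.1 z.1.2.2 - dXi B ψ z.2.1 z.2.2.2))
      =O[𝓟 (admissiblePairs M δ)] relEntPair ψ := by
  obtain ⟨K, hI⟩ := hN.exists_controlsDeviation hψ M hδ
  have hdeg : (phiDegree B : ℝ) / p ≤ 1 :=
    (div_le_one (by linarith)).2 (le_trans (mod_cast phiDegree_le_two B) hp.le)
  exact comp_thermoState_isBigO_relEntPair hψ hδ (hI.sub_mul_sub_isBigO
    (contDiffOn_dPhi_fst B i α) (contDiffOn_uncurry_dXi hψ.contDiffOn one_add_one_eq_two.le B)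
    (by positivity) (sub_nonneg.2 hdeg) (add_sub_cancel _ _).le
    (dPhi_isBigO_growthWeight_rpow hN (by linarith) B i α)
    (hgrow.dXi_isBigO_growthWeight_rpow hψ hN hp B))

lemma dPhi_sub_sq_isBigO_relEntPair (hψ : IsStableFreeEnergy (Function.uncurry ψ))
    (hN : IsCoerciveFreeEnergy (Function.uncurry ψ) (growthFun p q r ℓ)) (hp : 4 ≤ p)
    (hδ : 0 < δ) (B : Idx) (i α : Fin 3) :
    (fun z : FullState × FullState ↦ (dPhi B i α z.1.1.1 - dPhi B i α z.2.1.1) ^ 2)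
      =O[𝓟 (admissiblePairs M δ)] relEntPair ψ := by
  obtain ⟨K, hI⟩ := hN.exists_controlsDeviation hψ M hδ
  have hdeg : (phiDegree B : ℝ) / p + phiDegree B / p ≤ 1 := by
    have hle : (phiDegree B : ℝ) ≤ 2 := mod_cast phiDegree_le_two B
    rw [← add_div, div_le_one (by linarith)]
    linarith
  have hgrowth := dPhi_isBigO_growthWeight_rpow hN (by linarith) B i α
  simp only [sq]
  exact comp_thermoState_isBigO_relEntPair hψ hδ (hI.sub_mul_sub_isBigO
    (contDiffOn_dPhi_fst B i α) (contDiffOn_dPhi_fst B i α) (by positivity) (by positivity) hdeg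
    hgrowth hgrowth)

lemma dPhi_sub_mul_velocity_sub_isBigO_relEntPair
    (hψ : IsStableFreeEnergy (Function.uncurry ψ))
    (hN : IsCoerciveFreeEnergy (Function.uncurry ψ) (growthFun p q r ℓ)) (hp : 4 ≤ p)
    (hδ : 0 < δ) (B : Idx) (i α : Fin 3) :
    (fun z : FullState × FullState ↦ (dPhi B i α z.1.1.1 - dPhi B i α z.2.1.1)
        * (z.1.2.1 i - z.2.2.1 i))
      =O[𝓟 (admissiblePairs M δ)] relEntPair ψ :=
  mul_isBigO_of_sq_isBigO (dPhi_sub_sq_isBigO_relEntPair hψ hN hp hδ B i α)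
    (velocity_sub_sq_isBigO_relEntPair hψ hδ i)

end UpperBounds

theorem upper_bounds_by_relative_entropy_general
    (ψ : Xi → ℝ → ℝ) (p q r ℓ : ℝ)
    (hψ3 : PsiC3 ψ) (hconv : PsiConvex ψ)
    (hgrow : OneSidedGrowthCond ψ p q r ℓ)
    (hp : 4 ≤ p) (hq : 1 < q) (hr : 1 < r) (hl : 1 ≤ ℓ)
    (M δ : ℝ) (hδ : 0 < δ) :
    ∃ C₀ C₁ C₂ C₃ : ℝ, 0 < C₀ ∧ 0 < C₁ ∧ 0 < C₂ ∧ 0 < C₃ ∧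
      ∀ (ξ : Xi) (v : Vec3) (θ : ℝ), 0 < θ → ∀ U' ∈ Gamma M δ,
        (|etaRel ψ ξ θ U'.1 U'.2.2|
          ≤ C₀ * relEnt ψ ξ v θ U'.1 U'.2.1 U'.2.2) ∧
        (∀ i α : Fin 3,
          |∑ B : Idx, (dPhi B i α ξ.1 - dPhi B i α U'.1.1)
              * (dXi B ψ ξ θ - dXi B ψ U'.1 U'.2.2)|
            ≤ C₁ * relEnt ψ ξ v θ U'.1 U'.2.1 U'.2.2) ∧
        (Real.sqrt (∑ B : Idx, (dXiRel B ψ ξ θ U'.1 U'.2.2)^2)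
          ≤ C₂ * relEnt ψ ξ v θ U'.1 U'.2.1 U'.2.2) ∧
        (∀ α : Fin 3,
          |∑ B : Idx, ∑ i, (dPhi B i α ξ.1 - dPhi B i α U'.1.1)
              * (v i - U'.2.1 i)|
            ≤ C₃ * relEnt ψ ξ v θ U'.1 U'.2.1 U'.2.2) := by
  have hψ2 : ContDiffOn ℝ 2 (Function.uncurry ψ) (positiveTemp Xi) := hψ3.of_le (by norm_num)
  have hψ := isStableFreeEnergy_uncurry hψ2 hconv
  have hN := hgrow.isCoerciveFreeEnergy (hψ2.of_le one_le_two) (by linarith) hq hr hl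
  have hI := fun z (hz : z ∈ admissiblePairs M δ) ↦ relEntPair_nonneg hψ hδ hz
  have hp2 : 2 < p := by linarith
  obtain ⟨C₀, hC₀, hη⟩ := exists_pos_forall_norm_le_of_isBigO
    (etaRel_isBigO_relEntPair hψ3 hψ hN hδ) hI
  obtain ⟨C₁, hC₁, hwork⟩ := exists_pos_forall_forall_norm_le_of_isBigO
    (fun k : Fin 3 × Fin 3 ↦ .fun_sum fun B _ ↦
      dPhi_sub_mul_dXi_sub_isBigO_relEntPair hψ hgrow hN hp2 hδ B k.1 k.2) hI
  obtain ⟨C₂, hC₂, hstress⟩ := exists_pos_forall_norm_le_of_isBigO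
    (sqrt_sum_sq_isBigO (dXiRel_isBigO_relEntPair hψ3 hψ hgrow hN hp2 hδ)) hI
  obtain ⟨C₃, hC₃, hflux⟩ := exists_pos_forall_forall_norm_le_of_isBigO
    (fun α ↦ .fun_sum fun B _ ↦ .fun_sum fun i _ ↦
      dPhi_sub_mul_velocity_sub_isBigO_relEntPair hψ hN hp hδ B i α) hI
  refine ⟨C₀, C₁, C₂, C₃, hC₀, hC₁, hC₂, hC₃, fun ξ v θ hθ U' hU' ↦ ?_⟩
  let z : FullState × FullState := ((ξ, v, θ), U')
  have hz : z ∈ admissiblePairs M δ := ⟨hθ, hU'⟩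
  exact ⟨hη z hz, fun i α ↦ hwork z hz (i, α), (le_abs_self _).trans (hstress z hz), hflux z hz⟩

/-- Appendix Lemma A.2(2),(4), upper bounds by the relative
entropy. -/
theorem upper_bounds_by_relative_entropy
    (ψ : Xi → ℝ → ℝ) (c p q r ℓ : ℝ)
    (hψ3 : PsiC3 ψ) (hconv : PsiConvex ψ)
    (hgrow : GrowthCond ψ c p q r ℓ)
    (hp : 4 ≤ p) (hq : 1 < q) (hr : 1 < r) (hl : 1 < ℓ)
    (M δ : ℝ) (hM : 0 < M) (hδ : 0 < δ) :
    ∃ C₀ C₁ C₂ C₃ : ℝ, 0 < C₀ ∧ 0 < C₁ ∧ 0 < C₂ ∧ 0 < C₃ ∧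
      ∀ (ξ : Xi) (v : Vec3) (θ : ℝ), 0 < θ → ∀ U' ∈ Gamma M δ,
        (|etaRel ψ ξ θ U'.1 U'.2.2|
          ≤ C₀ * relEnt ψ ξ v θ U'.1 U'.2.1 U'.2.2) ∧
        (∀ i α : Fin 3,
          |∑ B : Idx, (dPhi B i α ξ.1 - dPhi B i α U'.1.1)
              * (dXi B ψ ξ θ - dXi B ψ U'.1 U'.2.2)|
            ≤ C₁ * relEnt ψ ξ v θ U'.1 U'.2.1 U'.2.2) ∧
        (Real.sqrt (∑ B : Idx, (dXiRel B ψ ξ θ U'.1 U'.2.2)^2)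
          ≤ C₂ * relEnt ψ ξ v θ U'.1 U'.2.1 U'.2.2) ∧
        (∀ α : Fin 3,
          |∑ B : Idx, ∑ i, (dPhi B i α ξ.1 - dPhi B i α U'.1.1)
              * (v i - U'.2.1 i)|
            ≤ C₃ * relEnt ψ ξ v θ U'.1 U'.2.1 U'.2.2) := by
  exact upper_bounds_by_relative_entropy_general ψ p q r ℓ hψ3 hconv hgrow.oneSided hp hq hr
    hl.le M δ hδ

end
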